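/- Let κ ≥ κ⁺. There exist positive constants C and δ_0 such that: for every u_0 ∈ C^1(ℝ;ℝ) such that the functions (u_0 − ū)/Ω_κ^+ and (u_0 − ū)'/Ω_κ^+ are bounded and uniformly continuous on ℝ and E_{0,κ} := ‖u_0 − ū‖_{W^{1,∞}_{κ,+}} ≤ δ_0, there is a unique u ∈ C^1([0,∞)×ℝ;ℝ) with ∂_t u(t,x) + f'(u(t,x))·∂_x u(t,x) = g(u(t,x)) for all (t,x) and u(0,·) = u_0, and this solution satisfies, for every t ≥ 0, ‖u(t, · + σt) − ū‖_{W^{1,∞}_{κ,+}} ≤ C·E_{0,κ}·exp(−t·ω_κ). -/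

import Mathlib

/-! The sign `g' u₊ > 0` forces `f' < σ` along the front, so in the moving frame `y = x - σ t`
every characteristic runs to the left and can be parametrised by the distance `η` travelled instead
of by time. With `A = 1 / (σ - f')` and `G = -g A` the equation for `w (t, y) = u (t, y + σ t)`
reads `A(w) w_t = w_y - G(w)`. Its solution started from `u₀` takes the value `Φ η (u₀ x)` at `y = x - η`,
where `Φ` is the flow of `-G`, at the time `∫₀^η A (Φ s (u₀ x)) ds`. Since the profile equation is
`ub' = G ub`, the values `ub (x - η)` of the front form an orbit of the same scalar autonomous flow,
and `p = |ub'|` solves the linearised equation along it.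

Stability therefore reduces to comparing nearby orbits of a scalar flow. If `d` is the difference of
two orbits, `p / d` has derivative `O(p)`, and `p` has the bounded primitive `n = |ub - u₋|`;
provided `d` is small relative to `p / n` initially, `d` stays bounded by a multiple of `p`
(`Front.d_bound`), and the same mechanism bounds the linearised flow, the elapsed time and its
derivative (`Front.S_bound`, `Front.T_bound`, `Front.R_bound`). The weight and the rate enter only
through `p`: with the weight `exp (κ x⁺)` and the factor `exp (-ω Θ)`, where `Θ` is the time along
the front, `p` is increasing up to a constant (`exists_front`), because its logarithmic derivative
has nonnegative limits at both ends, up to an error `O(p)`. This gives the decay in time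
(`Front.decay`).

Smallness also makes the arrival time at a fixed `y` strictly increasing in the foot of the
characteristic, so characteristics neither cross nor miss a point, and the implicit function theorem
gives a `C¹` solution (`Front.core`). The nonlinearities are truncated outside a neighbourhood of
the range of the front (`exists_cutoff`), which the solution never leaves. Uniqueness follows from
Grönwall along characteristics (`IsClassicalSol.along`). -/

open Filter Set Function

/-- The weighted `W^{1,∞}` norm `‖v‖_{W^{1,∞}_{κ,+}} = sup_x max(|v x|, |v' x|)/Ω_κ^+(x)`,
where `Ω_κ^+(x) = exp(−κ·max(x,0))`. -/
noncomputable def wNorm (κ : ℝ) (v : ℝ → ℝ) : ℝ :=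
  ⨆ x : ℝ, max |v x| |deriv v x| / Real.exp (-(κ * max x 0))

/-- Bounded and uniformly continuous real function on `ℝ`. -/
def IsBUC (h : ℝ → ℝ) : Prop :=
  (∃ M, ∀ x, |h x| ≤ M) ∧ UniformContinuous h

/-- `u : [0,∞) × ℝ → ℝ` is a global classical (`C¹`) solution of
`∂_t u + f'(u) ∂_x u = g(u)` with initial datum `u0`. -/
def IsClassicalSol (f g : ℝ → ℝ) (u0 : ℝ → ℝ) (u : ℝ → ℝ → ℝ) : Prop :=
  ContDiffOn ℝ 1 (uncurry u) (Ici (0:ℝ) ×ˢ (univ : Set ℝ)) ∧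
  (∀ x, u 0 x = u0 x) ∧
  ∀ t, 0 ≤ t → ∀ x : ℝ,
    derivWithin (fun s => u s x) (Ici (0:ℝ)) t
      + deriv f (u t x) * deriv (u t) x = g (u t x)

/-! ### Linear ODEs, mean derivatives and partial derivatives -/

lemma lin_ode {d c : ℝ → ℝ} (hc : Continuous c) (hd : ∀ t, HasDerivAt d (c t * d t) t) (t : ℝ) :
    d t = d 0 * Real.exp (∫ s in (0:ℝ)..t, c s) := by
  have hI : ∀ t, HasDerivAt (fun t => ∫ s in (0:ℝ)..t, c s) (c t) t := fun t =>
    intervalIntegral.integral_hasDerivAt_right (hc.intervalIntegrable _ _)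
      (hc.stronglyMeasurableAtFilter _ _) hc.continuousAt
  have h : ∀ t, HasDerivAt (fun t => d t * Real.exp (-(∫ s in (0:ℝ)..t, c s))) 0 t := fun t => by
    have := (hd t).mul ((hI t).neg.exp)
    convert! this using 1; ring
  have h2 := is_const_of_deriv_eq_zero (fun t => (h t).differentiableAt) (fun t => (h t).deriv) t 0
  simp only [intervalIntegral.integral_same, neg_zero, Real.exp_zero, mul_one] at h2
  rw [← h2, mul_assoc, ← Real.exp_add]; simp

/-- The mean of `H'` over the segment from `b` to `a`, so that `H a - H b = avg H a b * (a - b)`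
(`avg_mul`). It turns differences of solutions of an ODE into solutions of linear ODEs. -/
noncomputable def avg (H : ℝ → ℝ) (a b : ℝ) : ℝ := ∫ θ in (0:ℝ)..1, deriv H (b + θ * (a - b))

lemma continuous_avg {H : ℝ → ℝ} (hH : ContDiff ℝ 1 H) :
    Continuous (fun p : ℝ × ℝ => avg H p.1 p.2) := by
  have := hH.continuous_deriv le_rfl
  unfold avg
  apply intervalIntegral.continuous_parametric_intervalIntegral_of_continuous'
  fun_prop

lemma avg_mul {H : ℝ → ℝ} (hH : ContDiff ℝ 1 H) (a b : ℝ) :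
    avg H a b * (a - b) = H a - H b := by
  have hc := hH.continuous_deriv le_rfl
  have hd : ∀ θ : ℝ, HasDerivAt (fun θ => H (b + θ * (a - b)))
      (deriv H (b + θ * (a - b)) * (a - b)) θ := fun θ => by
    have h1 : HasDerivAt (fun θ : ℝ => b + θ * (a - b)) (a - b) θ := by
      simpa using ((hasDerivAt_id θ).mul_const (a - b)).const_add b
    exact (hH.differentiable one_ne_zero _).hasDerivAt.comp θ h1
  have := intervalIntegral.integral_eq_sub_of_hasDerivAt (a := 0) (b := 1) (fun θ _ => hd θ)
    (Continuous.intervalIntegrable (by fun_prop) _ _)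
  rw [intervalIntegral.integral_mul_const] at this
  simpa [avg] using this

lemma avg_self (H : ℝ → ℝ) (a : ℝ) : avg H a a = deriv H a := by simp [avg]

lemma abs_avg_le {H : ℝ → ℝ} {K : ℝ} (hK : ∀ x, |deriv H x| ≤ K) (a b : ℝ) :
    |avg H a b| ≤ K := by
  simpa [avg] using intervalIntegral.norm_integral_le_of_norm_le_const (a := 0) (b := 1)
    (f := fun θ => deriv H (b + θ * (a - b))) (C := K) (fun x _ => hK _)

/-- A function of two variables with continuous partial derivatives is `C¹`. -/
lemma contDiff_of_partials {F F1 F2 : ℝ → ℝ → ℝ}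
    (h1 : ∀ x y, HasDerivAt (fun x => F x y) (F1 x y) x)
    (h2 : ∀ x y, HasDerivAt (fun y => F x y) (F2 x y) y) (c1 : Continuous (uncurry F1))
    (c2 : Continuous (uncurry F2)) : ContDiff ℝ 1 (uncurry F) := by
  let L1 : ℝ → ℝ → ℝ →L[ℝ] ℝ := fun x y => ContinuousLinearMap.toSpanSingleton ℝ (F1 x y)
  let L2 : ℝ → ℝ → ℝ →L[ℝ] ℝ := fun x y => ContinuousLinearMap.toSpanSingleton ℝ (F2 x y)
  have hc1 : Continuous ↿L1 := by
    have : Continuous fun p : ℝ × ℝ =>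
        ContinuousLinearMap.toSpanSingletonCLE (𝕜 := ℝ) (uncurry F1 p) := by
      fun_prop
    exact this
  have hc2 : Continuous ↿L2 := by
    have : Continuous fun p : ℝ × ℝ =>
        ContinuousLinearMap.toSpanSingletonCLE (𝕜 := ℝ) (uncurry F2 p) := by
      fun_prop
    exact this
  rw [contDiff_one_iff_fderiv]
  have key : ∀ u : ℝ × ℝ, HasFDerivAt (uncurry F) ((↿L1 u).coprod (↿L2 u)) u := fun u =>
    (hasStrictFDerivAt_uncurry_coprod (f := F) (f₁ := L1) (f₂ := L2)
      (Eventually.of_forall fun v => (h1 v.1 v.2).hasFDerivAt)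
      (Eventually.of_forall fun v => (h2 v.1 v.2).hasFDerivAt)
      hc1.continuousAt hc2.continuousAt).hasFDerivAt
  refine ⟨fun u => (key u).differentiableAt, ?_⟩
  have : fderiv ℝ (uncurry F) = fun u => (↿L1 u).coprod (↿L2 u) := funext fun u => (key u).fderiv
  rw [this]
  fun_prop

lemma hasDerivAt_comp2 {F : ℝ → ℝ → ℝ} {a b : ℝ → ℝ} {a' b' F1 F2 t : ℝ}
    (hF : DifferentiableAt ℝ (uncurry F) (a t, b t))
    (h1 : HasDerivAt (fun x => F x (b t)) F1 (a t))
    (h2 : HasDerivAt (fun y => F (a t) y) F2 (b t)) (ha : HasDerivAt a a' t)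
    (hb : HasDerivAt b b' t) : HasDerivAt (fun t => F (a t) (b t)) (F1 * a' + F2 * b') t := by
  have hd := hF.hasFDerivAt
  have e1 : fderiv ℝ (uncurry F) (a t, b t) (1, 0) = F1 :=
    (hd.comp_hasDerivAt (f := fun x => (x, b t)) (a t)
      ((hasDerivAt_id (a t)).prodMk (hasDerivAt_const (a t) (b t)))).unique h1
  have e2 : fderiv ℝ (uncurry F) (a t, b t) (0, 1) = F2 :=
    (hd.comp_hasDerivAt (f := fun y => (a t, y)) (b t)
      ((hasDerivAt_const (b t) (a t)).prodMk (hasDerivAt_id (b t)))).unique h2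
  have h := hd.comp_hasDerivAt t (ha.prodMk hb)
  have e3 : ((a', b') : ℝ × ℝ) = a' • ((1, 0) : ℝ × ℝ) + b' • ((0, 1) : ℝ × ℝ) := by
    simp
  rw [e3, map_add, map_smul, map_smul, e1, e2] at h
  convert! h using 1
  simp only [smul_eq_mul]; ring

/-! ### Flows of scalar autonomous fields -/

/-- `Φ t v` is the value at time `t` of a global solution of `z' = H z` started at `v`. -/
structure IsFlow (H : ℝ → ℝ) (Φ : ℝ → ℝ → ℝ) : Prop where
  zero : ∀ v, Φ 0 v = v
  ode : ∀ v t, HasDerivAt (fun t => Φ t v) (H (Φ t v)) t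

/-- A bounded `C¹` field with bounded derivative has global solutions: Picard–Lindelöf on
`[-(n+1), n+1]` for every `n`, glued by uniqueness. -/
lemma exists_solution {H : ℝ → ℝ} {K : ℝ} (hH : ContDiff ℝ 1 H) (hb : ∀ x, |H x| ≤ K)
    (hb' : ∀ x, |deriv H x| ≤ K) (v : ℝ) :
    ∃ α : ℝ → ℝ, α 0 = v ∧ ∀ t, HasDerivAt α (H (α t)) t := by
  have hK : 0 ≤ K := (abs_nonneg _).trans (hb 0)
  have hlip : LipschitzWith ⟨K, hK⟩ H :=
    lipschitzWith_of_nnnorm_deriv_le (hH.differentiable one_ne_zero) (fun x => hb' x)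
  have loc : ∀ n : ℕ, ∃ α : ℝ → ℝ, α 0 = v ∧
      ∀ t ∈ Ioo (-(n + 1 : ℝ)) (n + 1), HasDerivAt α (H (α t)) t := by
    intro n
    have hn : (0:ℝ) ≤ n := n.cast_nonneg
    have h0 : (0:ℝ) ∈ Icc (-(n + 1 : ℝ)) (n + 1) := ⟨by linarith, by linarith⟩
    have hp : IsPicardLindelof (fun _ => H) (⟨0, h0⟩ : Icc (-(n + 1 : ℝ)) (n + 1)) v
        (⟨K * (n + 1), by positivity⟩) 0 ⟨K, hK⟩ ⟨K, hK⟩ := by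
      apply IsPicardLindelof.of_time_independent
      · intro x _; exact hb x
      · exact hlip.lipschitzOnWith
      · simp; exact le_rfl
    obtain ⟨α, h1, h2⟩ := hp.exists_eq_forall_mem_Icc_hasDerivWithinAt₀
    exact ⟨α, h1, fun t ht => (h2 t (Ioo_subset_Icc_self ht)).hasDerivAt (Icc_mem_nhds ht.1 ht.2)⟩
  choose α hα0 hα using loc
  have agree : ∀ m n : ℕ, m ≤ n → EqOn (α m) (α n) (Ioo (-(m + 1 : ℝ)) (m + 1)) := by
    intro m n hmn
    have hm : (0:ℝ) ≤ m := m.cast_nonneg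
    have hmn' : (m:ℝ) ≤ n := by exact_mod_cast hmn
    exact ODE_solution_unique_of_mem_Ioo (v := fun _ => H) (s := fun _ => univ) (K := ⟨K, hK⟩)
      (t₀ := 0) (fun t _ => hlip.lipschitzOnWith) ⟨by linarith, by linarith⟩
      (fun t ht => ⟨hα m t ht, trivial⟩)
      (fun t ht => ⟨hα n t ⟨by linarith [ht.1], by linarith [ht.2]⟩, trivial⟩)
      (by rw [hα0, hα0])
  refine ⟨fun t => α ⌈|t|⌉₊ t, by simp [hα0], fun t => ?_⟩
  set N := ⌈|t|⌉₊ + 1 with hN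
  have htN : |t| + 1 ≤ N := by push_cast [hN]; linarith [Nat.le_ceil |t|]
  have heq : ∀ s : ℝ, |s| < N → α ⌈|s|⌉₊ s = α N s := by
    intro s hs
    refine agree _ _ ?_ ?_
    · exact Nat.ceil_le.2 hs.le
    · rw [mem_Ioo, ← abs_lt]
      linarith [Nat.le_ceil |s|]
  have hev : (fun t => α ⌈|t|⌉₊ t) =ᶠ[nhds t] α N := by
    filter_upwards [(isOpen_lt continuous_abs continuous_const).mem_nhds
      (show |t| < (N:ℝ) by linarith)] with s hs using heq s hs
  change HasDerivAt _ (H (α ⌈|t|⌉₊ t)) t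
  rw [heq t (by linarith)]
  refine HasDerivAt.congr_of_eventuallyEq (hα N t ?_) hev
  rw [mem_Ioo, ← abs_lt]; linarith

lemma exists_flow {H : ℝ → ℝ} {K : ℝ} (hH : ContDiff ℝ 1 H) (hb : ∀ x, |H x| ≤ K)
    (hb' : ∀ x, |deriv H x| ≤ K) : ∃ Φ, IsFlow H Φ := by
  choose α h1 h2 using exists_solution hH hb hb'
  exact ⟨fun t v => α v t, h1, h2⟩

namespace IsFlow
variable {H : ℝ → ℝ} {Φ : ℝ → ℝ → ℝ} {K : ℝ}

lemma cont (hΦ : IsFlow H Φ) (v : ℝ) : Continuous fun t => Φ t v :=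
  continuous_iff_continuousAt.2 fun t => (hΦ.ode v t).continuousAt

lemma sub_eq (hΦ : IsFlow H Φ) (hH : ContDiff ℝ 1 H) (t v w : ℝ) :
    Φ t v - Φ t w = (v - w) * Real.exp (∫ s in (0:ℝ)..t, avg H (Φ s v) (Φ s w)) := by
  have := lin_ode (d := fun t => Φ t v - Φ t w) (c := fun t => avg H (Φ t v) (Φ t w))
    ((continuous_avg hH).comp₂ (hΦ.cont v) (hΦ.cont w))
    (fun t => by rw [avg_mul hH]; exact (hΦ.ode v t).sub (hΦ.ode w t)) t
  simpa [hΦ.zero] using this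

lemma continuous (hΦ : IsFlow H Φ) (hH : ContDiff ℝ 1 H) (hb : ∀ x, |H x| ≤ K)
    (hb' : ∀ x, |deriv H x| ≤ K) : Continuous (uncurry Φ) := by
  have hK : 0 ≤ K := (abs_nonneg _).trans (hb 0)
  have h1 : ∀ t t' v, |Φ t' v - Φ t v| ≤ K * |t' - t| := fun t t' v => by
    simpa using (convex_univ).norm_image_sub_le_of_norm_hasDerivWithin_le (x := t) (y := t')
      (fun x _ => (hΦ.ode v x).hasDerivWithinAt) (fun x _ => hb _) trivial trivial
  have h2 : ∀ t v w, |Φ t v - Φ t w| ≤ |v - w| * Real.exp (K * |t|) := fun t v w => by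
    rw [hΦ.sub_eq hH, abs_mul, abs_of_pos (Real.exp_pos _)]
    gcongr
    refine (le_abs_self _).trans ?_
    simpa using intervalIntegral.norm_integral_le_of_norm_le_const (a := 0) (b := t)
      (f := fun s => avg H (Φ s v) (Φ s w)) (C := K) (fun x _ => abs_avg_le hb' _ _)
  rw [continuous_iff_continuousAt]
  rintro ⟨t, v⟩
  rw [ContinuousAt, tendsto_iff_dist_tendsto_zero]
  refine squeeze_zero (g := fun p : ℝ × ℝ => K * |p.1 - t| + |p.2 - v| * Real.exp (K * |t|))
    (fun _ => dist_nonneg) (fun p => ?_) ?_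
  · rw [Real.dist_eq]
    calc |Φ p.1 p.2 - Φ t v| = |(Φ p.1 p.2 - Φ t p.2) + (Φ t p.2 - Φ t v)| := by ring_nf
      _ ≤ _ := (abs_add_le _ _).trans (add_le_add (h1 _ _ _) (h2 _ _ _))
  · have : Continuous fun p : ℝ × ℝ => K * |p.1 - t| + |p.2 - v| * Real.exp (K * |t|) := by fun_prop
    simpa using this.tendsto (t, v)

/-- The derivative of a flow in its initial value is the exponential of the integral of `H'` along
the orbit; it is the limit of the exact difference quotient given by `sub_eq`. -/
lemma hasDerivAt_snd (hΦ : IsFlow H Φ) (hH : ContDiff ℝ 1 H) (hb : ∀ x, |H x| ≤ K)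
    (hb' : ∀ x, |deriv H x| ≤ K) (t v : ℝ) :
    HasDerivAt (fun v => Φ t v) (Real.exp (∫ s in (0:ℝ)..t, deriv H (Φ s v))) v := by
  have hc := hΦ.continuous hH hb hb'
  have hE : Continuous fun w => Real.exp (∫ s in (0:ℝ)..t, avg H (Φ s w) (Φ s v)) := by
    apply Real.continuous_exp.comp
    apply intervalIntegral.continuous_parametric_intervalIntegral_of_continuous'
    refine (continuous_avg hH).comp₂ (hc.comp₂ continuous_snd continuous_fst)
      (hc.comp₂ continuous_snd continuous_const)
  rw [hasDerivAt_iff_tendsto_slope]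
  have h0 : Tendsto (fun w => Real.exp (∫ s in (0:ℝ)..t, avg H (Φ s w) (Φ s v))) (nhdsWithin v {v}ᶜ)
      (nhds (Real.exp (∫ s in (0:ℝ)..t, deriv H (Φ s v)))) := by
    have := hE.tendsto v
    simp only [avg_self] at this
    exact this.mono_left nhdsWithin_le_nhds
  refine h0.congr' ?_
  filter_upwards [self_mem_nhdsWithin] with w hw
  have : w - v ≠ 0 := sub_ne_zero.2 hw
  rw [slope_def_field, hΦ.sub_eq hH]
  field_simp

end IsFlow

/-- Differentiation under an integral over a bounded interval. -/
lemma hasDerivAt_primitive {F F' : ℝ → ℝ → ℝ} (hF : Continuous (uncurry F))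
    (hF' : Continuous (uncurry F')) (hd : ∀ s v, HasDerivAt (fun v => F s v) (F' s v) v) (t v : ℝ) :
    HasDerivAt (fun v => ∫ s in (0:ℝ)..t, F s v) (∫ s in (0:ℝ)..t, F' s v) v := by
  obtain ⟨M, hM⟩ := ((isCompact_uIcc (a := (0:ℝ)) (b := t)).prod
    (isCompact_closedBall v 1)).exists_bound_of_continuousOn hF'.continuousOn
  refine (intervalIntegral.hasDerivAt_integral_of_dominated_loc_of_deriv_le
    (F := fun v s => F s v) (F' := fun v s => F' s v)
    (s := Metric.ball v 1) (bound := fun _ => M)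
    (Metric.ball_mem_nhds v one_pos) (Eventually.of_forall fun w => ?_) ?_ ?_ ?_ ?_ ?_).2
  · exact Continuous.aestronglyMeasurable (hF.comp₂ continuous_id continuous_const)
  · exact (hF.comp₂ continuous_id continuous_const).intervalIntegrable _ _
  · exact Continuous.aestronglyMeasurable (hF'.comp₂ continuous_id continuous_const)
  · refine Eventually.of_forall fun s hs w hw => ?_
    exact hM (s, w) ⟨uIoc_subset_uIcc hs, Metric.ball_subset_closedBall hw⟩
  · simp
  · exact Eventually.of_forall fun s _ w _ => hd s w

/-! ### Comparison of characteristics with the front -/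

lemma le_init_of_deriv_nonpos {f f' : ℝ → ℝ} (h : ∀ x, 0 ≤ x → HasDerivAt f (f' x) x)
    (h' : ∀ x, 0 ≤ x → f' x ≤ 0) {x : ℝ} (hx : 0 ≤ x) : f x ≤ f 0 := by
  have : AntitoneOn f (Ici 0) := by
    refine antitoneOn_of_deriv_nonpos (convex_Ici 0)
      (fun y hy => (h y hy).continuousAt.continuousWithinAt)
      (fun y hy => (h y (interior_subset hy)).differentiableAt.differentiableWithinAt)
      (fun y hy => ?_)
    rw [(h y (interior_subset hy)).deriv]; exact h' y (interior_subset hy)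
  exact this (Set.mem_Ici.2 le_rfl) hx hx

lemma taylor_bound {G : ℝ → ℝ} {K : ℝ} (hG : ContDiff ℝ 1 G)
    (Glip : ∀ v w, |deriv G v - deriv G w| ≤ K * |v - w|) (hK : 0 ≤ K) (a b : ℝ) :
    |G a - G b - deriv G b * (a - b)| ≤ K * (a - b) ^ 2 := by
  have hd : ∀ x ∈ segment ℝ b a, HasDerivWithinAt (fun x => G x - deriv G b * x)
      (deriv G x - deriv G b) (segment ℝ b a) x := fun x _ => by
    have := ((hG.differentiable one_ne_zero x).hasDerivAt.sub
      ((hasDerivAt_id x).const_mul (deriv G b))).hasDerivWithinAt (s := segment ℝ b a)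
    convert! this using 1; ring
  have := (convex_segment b a).norm_image_sub_le_of_norm_hasDerivWithin_le (C := K * |a - b|) hd
    (fun x hx => (Glip x b).trans (mul_le_mul_of_nonneg_left ?_ hK)) (left_mem_segment ℝ b a)
    (right_mem_segment ℝ b a)
  · calc |G a - G b - deriv G b * (a - b)|
        = ‖G a - deriv G b * a - (G b - deriv G b * b)‖ := by rw [Real.norm_eq_abs]; ring_nf
      _ ≤ _ := this
      _ = K * (a - b) ^ 2 := by rw [Real.norm_eq_abs, mul_assoc, abs_mul_abs_self]; ring
  · rw [segment_eq_uIcc] at hx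
    exact abs_sub_left_of_mem_uIcc hx

/-- The data used to compare characteristics with the front profile `ub`. `G` and `A` are the
globally bounded versions of `-g / (σ - f')` and `1 / (σ - f')`; the profile solves `ub' = G ub`.
`p` and `n` stand for `|ub'|` and `|ub - u₋|`, and `Θ` is the signed time a characteristic of the
front itself takes to run from abscissa `x` to a fixed one. `F1` says that `p`, weighted in space by
`exp (κ x⁺)` and in time by `exp (-ω Θ)`, is nondecreasing up to the factor `C1`; `F2` bounds `n` by
the weighted `p`. -/
structure Front (G A ub p n Θ : ℝ → ℝ) (κ ω K C1 C2 α : ℝ) : Prop where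
  hG : ContDiff ℝ 1 G
  Gb : ∀ v, |G v| ≤ K
  Gb' : ∀ v, |deriv G v| ≤ K
  Glip : ∀ v w, |deriv G v - deriv G w| ≤ K * |v - w|
  hA : ContDiff ℝ 1 A
  Aα : ∀ v, α ≤ A v
  Ab : ∀ v, A v ≤ K
  Ab' : ∀ v, |deriv A v| ≤ K
  α0 : 0 < α
  ub' : ∀ x, HasDerivAt ub (G (ub x)) x
  p' : ∀ x, HasDerivAt p (deriv G (ub x) * p x) x
  p0 : ∀ x, 0 < p x
  n' : ∀ x, HasDerivAt n (p x) x
  n0 : ∀ x, 0 ≤ n x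
  Θ' : ∀ x, HasDerivAt Θ (A (ub x)) x
  C1nn : 0 ≤ C1
  C2nn : 0 ≤ C2
  ω0 : 0 ≤ ω
  F1 : ∀ y x, y ≤ x → p y * Real.exp (κ * max y 0) * Real.exp (-(ω * Θ y)) ≤
    C1 * (p x * Real.exp (κ * max x 0) * Real.exp (-(ω * Θ x)))
  F2 : ∀ x, n x ≤ C2 * (p x * Real.exp (κ * max x 0))

/-- The derivative of `Φ η v` in `v` when `Φ` is the flow of `-G`. -/
noncomputable def flowS (G : ℝ → ℝ) (Φ : ℝ → ℝ → ℝ) (η v : ℝ) : ℝ :=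
  Real.exp (∫ s in (0:ℝ)..η, -deriv G (Φ s v))

/-- The physical time spent along the characteristic with initial value `v` when it has moved
by `η` to the left in the moving frame. -/
noncomputable def flowT (A : ℝ → ℝ) (Φ : ℝ → ℝ → ℝ) (η v : ℝ) : ℝ :=
  ∫ s in (0:ℝ)..η, A (Φ s v)

/-- The derivative of `flowT A Φ η v` in `v`. -/
noncomputable def flowR (G A : ℝ → ℝ) (Φ : ℝ → ℝ → ℝ) (η v : ℝ) : ℝ :=
  ∫ s in (0:ℝ)..η, deriv A (Φ s v) * flowS G Φ s v

lemma hasDerivAt_prim {c : ℝ → ℝ} (hc : Continuous c) (t : ℝ) :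
    HasDerivAt (fun t => ∫ s in (0:ℝ)..t, c s) (c t) t :=
  intervalIntegral.integral_hasDerivAt_right (hc.intervalIntegrable _ _)
    (hc.stronglyMeasurableAtFilter _ _) hc.continuousAt

namespace Front
variable {G A ub p n Θ : ℝ → ℝ} {κ ω K C1 C2 α : ℝ} {Φ : ℝ → ℝ → ℝ}

lemma Knn (F : Front G A ub p n Θ κ ω K C1 C2 α) : 0 ≤ K := (abs_nonneg _).trans (F.Gb 0)

lemma Lip (F : Front G A ub p n Θ κ ω K C1 C2 α) (v w : ℝ) : |G v - G w| ≤ K * |v - w| := by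
  rw [← avg_mul F.hG, abs_mul]
  exact mul_le_mul_of_nonneg_right (abs_avg_le F.Gb' _ _) (abs_nonneg _)

lemma LipA (F : Front G A ub p n Θ κ ω K C1 C2 α) (v w : ℝ) : |A v - A w| ≤ K * |v - w| := by
  rw [← avg_mul F.hA, abs_mul]
  exact mul_le_mul_of_nonneg_right (abs_avg_le F.Ab' _ _) (abs_nonneg _)

lemma dneg (G : ℝ → ℝ) : deriv (fun v => -G v) = fun v => -deriv G v := by
  funext v; simp

lemma contΦ (F : Front G A ub p n Θ κ ω K C1 C2 α) (hΦ : IsFlow (fun v => -G v) Φ) :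
    Continuous (uncurry Φ) :=
  hΦ.continuous (K := K) F.hG.neg (by simpa using F.Gb) (by simpa [dneg] using F.Gb')

lemma Φ_snd (F : Front G A ub p n Θ κ ω K C1 C2 α) (hΦ : IsFlow (fun v => -G v) Φ) (η v : ℝ) :
    HasDerivAt (fun v => Φ η v) (flowS G Φ η v) v := by
  have := hΦ.hasDerivAt_snd (K := K) F.hG.neg (by simpa using F.Gb)
    (by simpa [dneg] using F.Gb') η v
  simp only [dneg] at this
  exact this

lemma contS (F : Front G A ub p n Θ κ ω K C1 C2 α) (hΦ : IsFlow (fun v => -G v) Φ) :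
    Continuous (uncurry (flowS G Φ)) := by
  have hc := F.contΦ hΦ
  have hG' := F.hG.continuous_deriv le_rfl
  have : Continuous (fun q : ℝ × ℝ => ∫ s in (0:ℝ)..q.1, -deriv G (Φ s q.2)) := by
    apply intervalIntegral.continuous_parametric_intervalIntegral_of_continuous
    · exact (hG'.comp (hc.comp₂ continuous_snd (continuous_snd.comp continuous_fst))).neg
    · exact continuous_fst
  exact Real.continuous_exp.comp this

lemma contDiffΦ (F : Front G A ub p n Θ κ ω K C1 C2 α) (hΦ : IsFlow (fun v => -G v) Φ) :
    ContDiff ℝ 1 (uncurry Φ) :=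
  contDiff_of_partials (fun η v => hΦ.ode v η) (F.Φ_snd hΦ)
    (F.hG.continuous.comp (F.contΦ hΦ)).neg (F.contS hΦ)

lemma T_fst (F : Front G A ub p n Θ κ ω K C1 C2 α) (hΦ : IsFlow (fun v => -G v) Φ) (η v : ℝ) :
    HasDerivAt (fun η => flowT A Φ η v) (A (Φ η v)) η :=
  hasDerivAt_prim (F.hA.continuous.comp (hΦ.cont v)) η

lemma R_fst (F : Front G A ub p n Θ κ ω K C1 C2 α) (hΦ : IsFlow (fun v => -G v) Φ) (η v : ℝ) :
    HasDerivAt (fun η => flowR G A Φ η v) (deriv A (Φ η v) * flowS G Φ η v) η :=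
  hasDerivAt_prim (c := fun η => deriv A (Φ η v) * flowS G Φ η v)
    (((F.hA.continuous_deriv le_rfl).comp (hΦ.cont v)).mul
    ((F.contS hΦ).comp₂ continuous_id continuous_const)) η

lemma T_snd (F : Front G A ub p n Θ κ ω K C1 C2 α) (hΦ : IsFlow (fun v => -G v) Φ) (η v : ℝ) :
    HasDerivAt (fun v => flowT A Φ η v) (flowR G A Φ η v) v :=
  hasDerivAt_primitive (F := fun s v => A (Φ s v))
    (F' := fun s v => deriv A (Φ s v) * flowS G Φ s v)
    (F.hA.continuous.comp (F.contΦ hΦ))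
    (((F.hA.continuous_deriv le_rfl).comp (F.contΦ hΦ)).mul (F.contS hΦ))
    (fun s v => ((F.hA.differentiable one_ne_zero _).hasDerivAt.comp v (F.Φ_snd hΦ s v))) η v

lemma contDiffT (F : Front G A ub p n Θ κ ω K C1 C2 α) (hΦ : IsFlow (fun v => -G v) Φ) :
    ContDiff ℝ 1 (uncurry (flowT A Φ)) := by
  refine contDiff_of_partials (F.T_fst hΦ) (F.T_snd hΦ) (F.hA.continuous.comp (F.contΦ hΦ)) ?_
  apply intervalIntegral.continuous_parametric_intervalIntegral_of_continuous (X := ℝ × ℝ)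
    (f := fun q s => deriv A (Φ s q.2) * flowS G Φ s q.2) (s := fun q => q.1)
  · exact ((F.hA.continuous_deriv le_rfl).comp
      ((F.contΦ hΦ).comp₂ continuous_snd (continuous_snd.comp continuous_fst))).mul
      ((F.contS hΦ).comp₂ continuous_snd (continuous_snd.comp continuous_fst))
  · exact continuous_fst

lemma S_fst (F : Front G A ub p n Θ κ ω K C1 C2 α) (hΦ : IsFlow (fun v => -G v) Φ) (η v : ℝ) :
    HasDerivAt (fun η => flowS G Φ η v) (flowS G Φ η v * -deriv G (Φ η v)) η :=
  (hasDerivAt_prim (c := fun η => -deriv G (Φ η v))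
    ((F.hG.continuous_deriv le_rfl).comp (hΦ.cont v)).neg η).exp

lemma S_pos (η v : ℝ) : 0 < flowS G Φ η v := Real.exp_pos _

/-- `η ↦ G (Φ η v)` solves the linearised equation, hence is a multiple of `flowS`. -/
lemma G_Φ (F : Front G A ub p n Θ κ ω K C1 C2 α) (hΦ : IsFlow (fun v => -G v) Φ) (η v : ℝ) :
    G (Φ η v) = flowS G Φ η v * G v := by
  have := lin_ode (d := fun η => G (Φ η v)) (c := fun η => -deriv G (Φ η v))
    ((F.hG.continuous_deriv le_rfl).comp (hΦ.cont v)).neg (fun t => by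
      have := (F.hG.differentiable one_ne_zero (Φ t v)).hasDerivAt.comp t (hΦ.ode v t)
      convert! this using 1; ring) η
  rw [this, hΦ.zero, mul_comm]; rfl

/-- Moving the initial value along the flow shifts the time integral; differentiating that shift
expresses `flowR * G v` through the end values of `A` alone. -/
lemma R_G (F : Front G A ub p n Θ κ ω K C1 C2 α) (hΦ : IsFlow (fun v => -G v) Φ) (η v : ℝ) :
    flowR G A Φ η v * G v = A v - A (Φ η v) := by
  have h : ∀ t, HasDerivAt (fun η => flowR G A Φ η v * G v + A (Φ η v)) 0 t := fun t => by
    have h1 := (F.R_fst hΦ t v).mul_const (G v)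
    have h2 := (F.hA.differentiable one_ne_zero (Φ t v)).hasDerivAt.comp t (hΦ.ode v t)
    convert! h1.add h2 using 1
    rw [F.G_Φ hΦ]; ring
  have h2 := is_const_of_deriv_eq_zero (fun t => (h t).differentiableAt) (fun t => (h t).deriv) η 0
  simp only [flowR, intervalIntegral.integral_same, hΦ.zero] at h2 ⊢
  linarith

section path
variable {x0 v E : ℝ}

lemma rev {f : ℝ → ℝ} {f' : ℝ → ℝ} (h : ∀ x, HasDerivAt f (f' x) x) (x0 η : ℝ) :
    HasDerivAt (fun η => f (x0 - η)) (-f' (x0 - η)) η := by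
  have h1 : HasDerivAt (fun η : ℝ => x0 - η) (-1) η := by
    simpa using (hasDerivAt_id η).const_sub x0
  have := (h (x0 - η)).comp η h1
  convert! this using 1; ring

lemma init_small (F : Front G A ub p n Θ κ ω K C1 C2 α)
    (hE : |v - ub x0| * Real.exp (κ * max x0 0) ≤ E) (hs : K * E * C2 ≤ 1 / 2) :
    K * |v - ub x0| * n x0 ≤ p x0 / 2 := by
  have hp := F.p0 x0
  have := F.Knn
  have := F.C2nn
  calc K * |v - ub x0| * n x0 ≤ K * |v - ub x0| * (C2 * (p x0 * Real.exp (κ * max x0 0))) := by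
        gcongr; exact F.F2 x0
    _ = K * C2 * p x0 * (|v - ub x0| * Real.exp (κ * max x0 0)) := by ring
    _ ≤ K * C2 * p x0 * E := by gcongr
    _ = (K * E * C2) * p x0 := by ring
    _ ≤ 1 / 2 * p x0 := by gcongr
    _ = _ := by ring

/-- Along a characteristic, the distance `d` to the front is controlled by `p = |ub'|`. Both `d` and
`p` solve the linearised equation up to a quadratic error in `d`, so `p / d` has derivative at most
`K p` in absolute value; as `n` is a primitive of `p`, `p / d` moves by at most `K n x0`, which the
smallness hypothesis makes at most half of its initial value. -/
lemma d_bound (F : Front G A ub p n Θ κ ω K C1 C2 α) (hΦ : IsFlow (fun v => -G v) Φ)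
    (hs : K * |v - ub x0| * n x0 ≤ p x0 / 2) {η : ℝ} (hη : 0 ≤ η) :
    |Φ η v - ub (x0 - η)| * p x0 ≤ 2 * |v - ub x0| * p (x0 - η) := by
  set d : ℝ → ℝ := fun η => Φ η v - ub (x0 - η) with hd
  have hbc : Continuous ub := continuous_iff_continuousAt.2 fun x => (F.ub' x).continuousAt
  have hd' : ∀ t, HasDerivAt d (-(G (Φ t v) - G (ub (x0 - t)))) t := fun t => by
    have := (hΦ.ode v t).sub (rev F.ub' x0 t)
    convert! this using 1; ring
  have hlin := lin_ode (d := d) (c := fun t => -avg G (Φ t v) (ub (x0 - t)))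
    ((continuous_avg F.hG).comp₂ (hΦ.cont v) (hbc.comp (by fun_prop))).neg (fun t => by
      convert! hd' t using 1; rw [← avg_mul F.hG]; ring)
  have hd0 : d 0 = v - ub x0 := by simp [hd, hΦ.zero]
  change |d η| * p x0 ≤ _
  rcases eq_or_ne (d 0) 0 with h0 | h0
  · rw [hlin, h0, ← hd0, h0]; simp
  have hne : ∀ t, d t ≠ 0 := fun t => by rw [hlin]; exact mul_ne_zero h0 (Real.exp_pos _).ne'
  rw [← hd0] at hs ⊢
  have hP : ∀ t, HasDerivAt (fun t => p (x0 - t)) (-(deriv G (ub (x0 - t)) * p (x0 - t))) t :=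
    rev F.p' x0
  have hN : ∀ t, HasDerivAt (fun t => n (x0 - t)) (-p (x0 - t)) t := rev F.n' x0
  set z' : ℝ → ℝ := fun t => p (x0 - t) *
    ((G (Φ t v) - G (ub (x0 - t)) - deriv G (ub (x0 - t)) * d t) / d t ^ 2) with hz'
  have hz : ∀ t, HasDerivAt (fun t => p (x0 - t) / d t) (z' t) t := fun t => by
    convert! (hP t).div (hd' t) (hne t) using 1
    have := hne t
    simp only [hz']
    field_simp
    ring
  -- the numerator in `z'` is a second-order Taylor remainder of `G`
  have hzb : ∀ t, |z' t| ≤ K * p (x0 - t) := fun t => by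
    have := taylor_bound F.hG F.Glip F.Knn (Φ t v) (ub (x0 - t))
    rw [hz', abs_mul, abs_of_pos (F.p0 _), abs_div, abs_of_pos (sq_pos_of_ne_zero (hne t)),
      mul_comm]
    refine mul_le_mul_of_nonneg_right ?_ (F.p0 _).le
    rw [div_le_iff₀ (sq_pos_of_ne_zero (hne t))]
    exact this
  have h1 : p (x0 - η) / d η + K * n (x0 - η) ≤ p x0 / d 0 + K * n x0 := by
    have := le_init_of_deriv_nonpos (f := fun t => p (x0 - t) / d t + K * n (x0 - t))
      (fun t _ => (hz t).add ((hN t).const_mul K))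
      (fun t _ => by have := (abs_le.1 (hzb t)).2; linarith) hη
    simpa using this
  have h2 : -(p (x0 - η) / d η) + K * n (x0 - η) ≤ -(p x0 / d 0) + K * n x0 := by
    have := le_init_of_deriv_nonpos (f := fun t => -(p (x0 - t) / d t) + K * n (x0 - t))
      (fun t _ => (hz t).neg.add ((hN t).const_mul K))
      (fun t _ => by have := (abs_le.1 (hzb t)).1; linarith) hη
    simpa using this
  have hNn := mul_nonneg F.Knn (F.n0 (x0 - η))
  have h3 : |p x0 / d 0| - |p (x0 - η) / d η| ≤ K * n x0 :=
    (abs_sub_abs_le_abs_sub _ _).trans (abs_le.2 ⟨by linarith, by linarith⟩)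
  rw [abs_div, abs_div, abs_of_pos (F.p0 _), abs_of_pos (F.p0 _)] at h3
  have hpd0 : 0 < |d 0| := abs_pos.2 h0
  have hpd : 0 < |d η| := abs_pos.2 (hne η)
  have h4 : K * n x0 ≤ p x0 / |d 0| / 2 := by
    rw [le_div_iff₀ two_pos, le_div_iff₀ hpd0]; linarith
  have h5 : p x0 / |d 0| / 2 ≤ p (x0 - η) / |d η| := by linarith
  rw [div_div, div_le_div_iff₀ (by positivity) hpd] at h5
  linarith

end path
end Front

namespace Front
variable {G A ub p n Θ : ℝ → ℝ} {κ ω K C1 C2 α : ℝ} {Φ : ℝ → ℝ → ℝ}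
section path
variable {x0 v E : ℝ}

lemma K_d_le (F : Front G A ub p n Θ κ ω K C1 C2 α) (hΦ : IsFlow (fun v => -G v) Φ)
    (hs : K * |v - ub x0| * n x0 ≤ p x0 / 2) {η : ℝ} (hη : 0 ≤ η) :
    K * |Φ η v - ub (x0 - η)| ≤ 2 * K * |v - ub x0| / p x0 * p (x0 - η) := by
  have h := F.d_bound hΦ hs hη
  have hp := F.p0 x0
  rw [div_mul_eq_mul_div, le_div_iff₀ hp]
  have := mul_le_mul_of_nonneg_left h F.Knn
  linarith

lemma c_n0_le (F : Front G A ub p n Θ κ ω K C1 C2 α)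
    (hs : K * |v - ub x0| * n x0 ≤ p x0 / 2) :
    2 * K * |v - ub x0| / p x0 * n x0 ≤ 1 := by
  rw [div_mul_eq_mul_div, div_le_one (F.p0 x0)]; linarith

/-- `flowS / p` is almost nonincreasing: its logarithmic derivative is at most `K |d| ≤ c p`, which
the factor `exp (c n)` absorbs, and `c n x0 ≤ 1`. -/
lemma S_bound (F : Front G A ub p n Θ κ ω K C1 C2 α) (hΦ : IsFlow (fun v => -G v) Φ)
    (hs : K * |v - ub x0| * n x0 ≤ p x0 / 2) {η : ℝ} (hη : 0 ≤ η) :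
    flowS G Φ η v * p x0 ≤ 3 * p (x0 - η) := by
  set c := 2 * K * |v - ub x0| / p x0 with hc
  have hp0 := F.p0 x0
  have hc0 : 0 ≤ c := by have := F.Knn; positivity
  have hP : ∀ t, HasDerivAt (fun t => p (x0 - t)) (-(deriv G (ub (x0 - t)) * p (x0 - t))) t :=
    rev F.p' x0
  have hN : ∀ t, HasDerivAt (fun t => n (x0 - t)) (-p (x0 - t)) t := rev F.n' x0
  have hder : ∀ t, HasDerivAt
      (fun t => flowS G Φ t v / p (x0 - t) * Real.exp (c * n (x0 - t)))
      (flowS G Φ t v / p (x0 - t) * Real.exp (c * n (x0 - t)) *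
        (deriv G (ub (x0 - t)) - deriv G (Φ t v) - c * p (x0 - t))) t := fun t => by
    have hpt := (F.p0 (x0 - t)).ne'
    convert! ((F.S_fst hΦ t v).div (hP t) hpt).mul ((hN t).const_mul c).exp using 1
    simp only [Pi.div_apply]
    field_simp
    ring
  have key := le_init_of_deriv_nonpos (fun t _ => hder t) (fun t ht => by
    refine mul_nonpos_of_nonneg_of_nonpos ?_ ?_
    · have := F.p0 (x0 - t)
      have := S_pos (G := G) (Φ := Φ) t v
      positivity
    · have h1 := (abs_le.1 (F.Glip (Φ t v) (ub (x0 - t)))).1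
      have h2 := F.K_d_le hΦ hs ht
      linarith) hη
  have hS0 : flowS G Φ 0 v = 1 := by simp [flowS]
  simp only [sub_zero, hS0] at key
  have hp := F.p0 (x0 - η)
  have hSp := S_pos (G := G) (Φ := Φ) η v
  have h1 : flowS G Φ η v / p (x0 - η) ≤
      flowS G Φ η v / p (x0 - η) * Real.exp (c * n (x0 - η)) :=
    le_mul_of_one_le_right (by positivity) (Real.one_le_exp (mul_nonneg hc0 (F.n0 _)))
  have h2 : Real.exp (c * n x0) ≤ 3 :=
    (Real.exp_le_exp.2 (F.c_n0_le hs)).trans (by linarith [Real.exp_one_lt_d9])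
  have h3 : flowS G Φ η v / p (x0 - η) ≤ 1 / p x0 * 3 :=
    h1.trans (key.trans (by gcongr))
  rw [div_mul_eq_mul_div, one_mul, div_le_div_iff₀ hp hp0] at h3
  exact h3

/-- The time along a characteristic exceeds the time along the front by at most one, since the
error `K |d| ≤ c p` integrates to at most `c n x0 ≤ 1`. -/
lemma T_bound (F : Front G A ub p n Θ κ ω K C1 C2 α) (hΦ : IsFlow (fun v => -G v) Φ)
    (hs : K * |v - ub x0| * n x0 ≤ p x0 / 2) {η : ℝ} (hη : 0 ≤ η) :
    flowT A Φ η v ≤ Θ x0 - Θ (x0 - η) + 1 := by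
  set c := 2 * K * |v - ub x0| / p x0 with hc
  have hp0 := F.p0 x0
  have hc0 : 0 ≤ c := by have := F.Knn; positivity
  have hN : ∀ t, HasDerivAt (fun t => n (x0 - t)) (-p (x0 - t)) t := rev F.n' x0
  have hΘ : ∀ t, HasDerivAt (fun t => Θ (x0 - t)) (-A (ub (x0 - t))) t := rev F.Θ' x0
  have key := le_init_of_deriv_nonpos
    (fun t _ => ((F.T_fst hΦ t v).add (hΘ t)).add ((hN t).const_mul c))
    (fun t ht => by
      have h1 := (abs_le.1 (F.LipA (Φ t v) (ub (x0 - t)))).2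
      have h2 := F.K_d_le hΦ hs ht
      linarith) hη
  have hT0 : flowT A Φ 0 v = 0 := by simp [flowT]
  simp only [Pi.add_apply, sub_zero, hT0] at key
  have := mul_nonneg hc0 (F.n0 (x0 - η))
  have := F.c_n0_le hs
  linarith

/-- The derivative of time in the initial value is at most of the order of the inverse weight at
the foot, uniformly in `η`. -/
lemma R_bound (F : Front G A ub p n Θ κ ω K C1 C2 α) (hΦ : IsFlow (fun v => -G v) Φ)
    (hs : K * |v - ub x0| * n x0 ≤ p x0 / 2) {η : ℝ} (hη : 0 ≤ η) :
    |flowR G A Φ η v| ≤ 3 * K * C2 * Real.exp (κ * max x0 0) := by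
  set c := 3 * K / p x0 with hc
  have hp0 := F.p0 x0
  have hc0 : 0 ≤ c := by have := F.Knn; positivity
  have hN : ∀ t, HasDerivAt (fun t => n (x0 - t)) (-p (x0 - t)) t := rev F.n' x0
  have hb : ∀ t, 0 ≤ t → |deriv A (Φ t v) * flowS G Φ t v| ≤ c * p (x0 - t) := fun t ht => by
    rw [abs_mul, abs_of_pos (S_pos t v), hc, div_mul_eq_mul_div, le_div_iff₀ hp0]
    calc _ = |deriv A (Φ t v)| * (flowS G Φ t v * p x0) := by ring
      _ ≤ K * (3 * p (x0 - t)) := mul_le_mul (F.Ab' _) (F.S_bound hΦ hs ht)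
          (mul_nonneg (S_pos t v).le hp0.le) F.Knn
      _ = _ := by ring
  have hR0 : flowR G A Φ 0 v = 0 := by simp [flowR]
  have k1 := le_init_of_deriv_nonpos
    (fun t _ => (F.R_fst hΦ t v).add ((hN t).const_mul c))
    (fun t ht => by have := (abs_le.1 (hb t ht)).2; linarith) hη
  have k2 := le_init_of_deriv_nonpos
    (fun t _ => (F.R_fst hΦ t v).neg.add ((hN t).const_mul c))
    (fun t ht => by have := (abs_le.1 (hb t ht)).1; linarith) hη
  simp only [Pi.add_apply, Pi.neg_apply, sub_zero, hR0] at k1 k2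
  have := mul_nonneg hc0 (F.n0 (x0 - η))
  calc |flowR G A Φ η v| ≤ c * n x0 := abs_le.2 ⟨by linarith, by linarith⟩
    _ ≤ c * (C2 * (p x0 * Real.exp (κ * max x0 0))) :=
      mul_le_mul_of_nonneg_left (F.F2 x0) hc0
    _ = _ := by rw [hc]; field_simp

/-- The weighted `p` at the end of a characteristic, compared with its value at the foot: this is
where the exponential rate `ω` in physical time appears. -/
lemma decay (F : Front G A ub p n Θ κ ω K C1 C2 α) (hΦ : IsFlow (fun v => -G v) Φ)
    (hs : K * |v - ub x0| * n x0 ≤ p x0 / 2) {η : ℝ} (hη : 0 ≤ η) :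
    p (x0 - η) * Real.exp (κ * max (x0 - η) 0) ≤ C1 * Real.exp ω *
      (p x0 * Real.exp (κ * max x0 0)) * Real.exp (-(ω * flowT A Φ η v)) := by
  have h1 := F.F1 (x0 - η) x0 (by linarith)
  have h2 := mul_le_mul_of_nonneg_left (F.T_bound hΦ hs hη) F.ω0
  have hp0 := F.p0 x0
  have hC := F.C1nn
  calc p (x0 - η) * Real.exp (κ * max (x0 - η) 0)
      = p (x0 - η) * Real.exp (κ * max (x0 - η) 0) * Real.exp (-(ω * Θ (x0 - η))) *
        Real.exp (ω * Θ (x0 - η)) := by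
          rw [mul_assoc _ (Real.exp _) (Real.exp _), ← Real.exp_add]; simp
    _ ≤ C1 * (p x0 * Real.exp (κ * max x0 0) * Real.exp (-(ω * Θ x0))) *
        Real.exp (ω * Θ (x0 - η)) := by gcongr
    _ = C1 * (p x0 * Real.exp (κ * max x0 0)) *
        Real.exp (-(ω * Θ x0) + ω * Θ (x0 - η)) := by rw [Real.exp_add]; ring
    _ ≤ C1 * (p x0 * Real.exp (κ * max x0 0)) * Real.exp (ω + -(ω * flowT A Φ η v)) :=
        mul_le_mul_of_nonneg_left (Real.exp_le_exp.2 (by linarith)) (by positivity)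
    _ = _ := by rw [Real.exp_add]; ring

/-- Weighted decay of the perturbation along characteristics. -/
lemma w_bound (F : Front G A ub p n Θ κ ω K C1 C2 α) (hΦ : IsFlow (fun v => -G v) Φ)
    (hE : |v - ub x0| * Real.exp (κ * max x0 0) ≤ E) (hs : K * E * C2 ≤ 1 / 2)
    {η : ℝ} (hη : 0 ≤ η) :
    |Φ η v - ub (x0 - η)| * Real.exp (κ * max (x0 - η) 0) ≤
      2 * (C1 * Real.exp ω) * E * Real.exp (-(ω * flowT A Φ η v)) := by
  have hs := F.init_small hE hs
  have h1 := F.d_bound hΦ hs hη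
  have h2 := F.decay hΦ hs hη
  have hp0 := F.p0 x0
  have hC := F.C1nn
  refine le_of_mul_le_mul_right ?_ hp0
  calc |Φ η v - ub (x0 - η)| * Real.exp (κ * max (x0 - η) 0) * p x0
      = |Φ η v - ub (x0 - η)| * p x0 * Real.exp (κ * max (x0 - η) 0) := by ring
    _ ≤ 2 * |v - ub x0| * p (x0 - η) * Real.exp (κ * max (x0 - η) 0) := by gcongr
    _ = 2 * |v - ub x0| * (p (x0 - η) * Real.exp (κ * max (x0 - η) 0)) := by ring
    _ ≤ 2 * |v - ub x0| * (C1 * Real.exp ω *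
      (p x0 * Real.exp (κ * max x0 0)) * Real.exp (-(ω * flowT A Φ η v))) := by gcongr
    _ = 2 * (C1 * Real.exp ω) * (|v - ub x0| * Real.exp (κ * max x0 0)) *
      Real.exp (-(ω * flowT A Φ η v)) * p x0 := by ring
    _ ≤ 2 * (C1 * Real.exp ω) * E * Real.exp (-(ω * flowT A Φ η v)) * p x0 := by gcongr

/-- Weighted decay of a quantity `r` transported by the linearised flow. -/
lemma Sr_bound (F : Front G A ub p n Θ κ ω K C1 C2 α) (hΦ : IsFlow (fun v => -G v) Φ)
    (hE : |v - ub x0| * Real.exp (κ * max x0 0) ≤ E) (hs : K * E * C2 ≤ 1 / 2)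
    {η : ℝ} (hη : 0 ≤ η) {r E' : ℝ} (hr : |r| * Real.exp (κ * max x0 0) ≤ E') :
    flowS G Φ η v * |r| * Real.exp (κ * max (x0 - η) 0) ≤
      3 * (C1 * Real.exp ω) * E' * Real.exp (-(ω * flowT A Φ η v)) := by
  have hs := F.init_small hE hs
  have h1 := F.S_bound hΦ hs hη
  have h2 := F.decay hΦ hs hη
  have hp0 := F.p0 x0
  have hC := F.C1nn
  refine le_of_mul_le_mul_right ?_ hp0
  calc flowS G Φ η v * |r| * Real.exp (κ * max (x0 - η) 0) * p x0
      = |r| * (flowS G Φ η v * p x0) * Real.exp (κ * max (x0 - η) 0) := by ring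
    _ ≤ |r| * (3 * p (x0 - η)) * Real.exp (κ * max (x0 - η) 0) := by gcongr
    _ = 3 * |r| * (p (x0 - η) * Real.exp (κ * max (x0 - η) 0)) := by ring
    _ ≤ 3 * |r| * (C1 * Real.exp ω *
      (p x0 * Real.exp (κ * max x0 0)) * Real.exp (-(ω * flowT A Φ η v))) := by gcongr
    _ = 3 * (C1 * Real.exp ω) * (|r| * Real.exp (κ * max x0 0)) *
      Real.exp (-(ω * flowT A Φ η v)) * p x0 := by ring
    _ ≤ 3 * (C1 * Real.exp ω) * E' * Real.exp (-(ω * flowT A Φ η v)) * p x0 := by gcongr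

end path
end Front

/-! ### Inversion of the time map and construction of the solution -/

/-- The scalar implicit function theorem for a real unknown depending on two real parameters. -/
lemma exists_implicit {F : (ℝ × ℝ) × ℝ → ℝ} (hF : ContDiff ℝ 1 F) {z0 : ℝ × ℝ} {x0 D : ℝ}
    (hD : HasDerivAt (fun x => F (z0, x)) D x0) (hD0 : D ≠ 0) :
    ∃ φ : ℝ × ℝ → ℝ, ContDiffAt ℝ 1 φ z0 ∧ φ z0 = x0 ∧
      ∀ᶠ z in nhds z0, F (z, φ z) = F (z0, x0) := by
  have cdf : ContDiffAt ℝ 1 F (z0, x0) := hF.contDiffAt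
  have hd := (hF.differentiable one_ne_zero (z0, x0)).hasFDerivAt
  have e1 : fderiv ℝ F (z0, x0) (0, 1) = D :=
    (hd.comp_hasDerivAt x0 ((hasDerivAt_const x0 z0).prodMk (hasDerivAt_id x0))).unique hD
  have inv : (fderiv ℝ F (z0, x0) ∘L .inr ℝ (ℝ × ℝ) ℝ).IsInvertible := by
    refine ContinuousLinearMap.IsInvertible.of_inverse
      (g := D⁻¹ • ContinuousLinearMap.id ℝ ℝ) ?_ ?_ <;>
    · ext; simp [e1, hD0]
  exact ⟨cdf.implicitFunction one_ne_zero inv, cdf.contDiffAt_implicitFunction one_ne_zero inv,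
    cdf.implicitFunction_apply_self one_ne_zero inv,
    cdf.eventually_apply_implicitFunction one_ne_zero inv⟩

/-- An initial datum whose perturbation of the front has weighted `W^{1,∞}` size at most `E`; the
derivative `ub'` of the front is written `G ub`. -/
structure Datum (G ub u0 : ℝ → ℝ) (κ E : ℝ) : Prop where
  smooth : ContDiff ℝ 1 u0
  b0 : ∀ x, |u0 x - ub x| * Real.exp (κ * max x 0) ≤ E
  b1 : ∀ x, |deriv u0 x - G (ub x)| * Real.exp (κ * max x 0) ≤ E

namespace Front
variable {G A ub p n Θ : ℝ → ℝ} {κ ω K C1 C2 α : ℝ} {Φ : ℝ → ℝ → ℝ}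
variable {u0 : ℝ → ℝ} {E : ℝ}

/-- The quantity `u0' - G u0` vanishes for translates of the front; it is what the linearised flow
transports. -/
lemma r_bound (F : Front G A ub p n Θ κ ω K C1 C2 α) (hu : Datum G ub u0 κ E) (x : ℝ) :
    |deriv u0 x - G (u0 x)| * Real.exp (κ * max x 0) ≤ (1 + K) * E := by
  have h0 := hu.b0 x
  have h1 := hu.b1 x
  have h2 := F.Lip (ub x) (u0 x)
  rw [abs_sub_comm (ub x)] at h2
  calc |deriv u0 x - G (u0 x)| * Real.exp (κ * max x 0)
      ≤ (|deriv u0 x - G (ub x)| + |G (ub x) - G (u0 x)|) * Real.exp (κ * max x 0) := by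
        gcongr; exact abs_sub_le _ _ _
    _ ≤ (|deriv u0 x - G (ub x)| + K * |u0 x - ub x|) * Real.exp (κ * max x 0) := by gcongr
    _ = |deriv u0 x - G (ub x)| * Real.exp (κ * max x 0) +
        K * (|u0 x - ub x| * Real.exp (κ * max x 0)) := by ring
    _ ≤ E + K * E := add_le_add h1 (mul_le_mul_of_nonneg_left h0 F.Knn)
    _ = _ := by ring

lemma u0_deriv (hu : Datum G ub u0 κ E) (x : ℝ) : HasDerivAt u0 (deriv u0 x) x :=
  (hu.smooth.differentiable one_ne_zero x).hasDerivAt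

/-- For fixed end point `y`, the derivative of the arrival time at `y` with respect to the foot `x`
of the characteristic. By `R_G` it does not see `G` except through the small `u0' - G u0`. -/
lemma time_deriv (F : Front G A ub p n Θ κ ω K C1 C2 α) (hΦ : IsFlow (fun v => -G v) Φ)
    (hu : Datum G ub u0 κ E) (y x : ℝ) :
    HasDerivAt (fun x => flowT A Φ (x - y) (u0 x))
      (A (u0 x) + flowR G A Φ (x - y) (u0 x) * (deriv u0 x - G (u0 x))) x := by
  have h := hasDerivAt_comp2 (a := fun x => x - y) ((F.contDiffT hΦ).differentiable one_ne_zero _)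
    (F.T_fst hΦ (x - y) (u0 x))
    (F.T_snd hΦ (x - y) (u0 x)) ((hasDerivAt_id x).sub_const y) (u0_deriv hu x)
  convert! h using 1
  have := F.R_G hΦ (x - y) (u0 x)
  linear_combination -this

lemma time_deriv_ge (F : Front G A ub p n Θ κ ω K C1 C2 α) (hΦ : IsFlow (fun v => -G v) Φ)
    (hu : Datum G ub u0 κ E) (s1 : K * E * C2 ≤ 1 / 2)
    (s2 : 3 * K * C2 * ((1 + K) * E) ≤ α / 2) {y x : ℝ} (hyx : y ≤ x) :
    α / 2 ≤ A (u0 x) + flowR G A Φ (x - y) (u0 x) * (deriv u0 x - G (u0 x)) := by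
  have h1 := F.R_bound hΦ (F.init_small (hu.b0 x) s1) (sub_nonneg.2 hyx)
  have h2 := F.r_bound hu x
  have h3 := F.Aα (u0 x)
  have hK := F.Knn
  have hC := F.C2nn
  have h4 : |flowR G A Φ (x - y) (u0 x) * (deriv u0 x - G (u0 x))| ≤ α / 2 := by
    rw [abs_mul]
    calc _ ≤ 3 * K * C2 * Real.exp (κ * max x 0) * |deriv u0 x - G (u0 x)| := by gcongr
      _ = 3 * K * C2 * (|deriv u0 x - G (u0 x)| * Real.exp (κ * max x 0)) := by ring
      _ ≤ 3 * K * C2 * ((1 + K) * E) := by gcongr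
      _ ≤ _ := s2
  have := (abs_le.1 h4).1
  linarith

lemma time_ge (F : Front G A ub p n Θ κ ω K C1 C2 α) (hΦ : IsFlow (fun v => -G v) Φ)
    {η : ℝ} (hη : 0 ≤ η) (v : ℝ) : α * η ≤ flowT A Φ η v := by
  have := le_init_of_deriv_nonpos (f := fun η => α * η - flowT A Φ η v)
    (fun t _ => ((hasDerivAt_id t).const_mul α).sub (F.T_fst hΦ t v))
    (fun t _ => by have := F.Aα (Φ t v); linarith) hη
  simp [flowT] at this ⊢
  exact this

lemma time_neg (F : Front G A ub p n Θ κ ω K C1 C2 α) (hΦ : IsFlow (fun v => -G v) Φ)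
    {η : ℝ} (hη : η < 0) (v : ℝ) : flowT A Φ η v < 0 := by
  have hm : StrictMono fun η => flowT A Φ η v :=
    strictMono_of_hasDerivAt_pos (F.T_fst hΦ · v) fun t => F.α0.trans_le (F.Aα _)
  have := hm hη
  simpa [flowT] using this

/-- For every `t ≥ 0` and `y`, exactly one characteristic of the initial datum passes through `y` at
time `t`. -/
lemma exists_foot (F : Front G A ub p n Θ κ ω K C1 C2 α) (hΦ : IsFlow (fun v => -G v) Φ)
    (hu : Datum G ub u0 κ E) (s1 : K * E * C2 ≤ 1 / 2)
    (s2 : 3 * K * C2 * ((1 + K) * E) ≤ α / 2) {t : ℝ} (ht : 0 ≤ t) (y : ℝ) :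
    ∃ x, y ≤ x ∧ flowT A Φ (x - y) (u0 x) = t ∧
      ∀ x', flowT A Φ (x' - y) (u0 x') = t → x' = x := by
  have hd := F.time_deriv hΦ hu y
  have hα := F.α0
  have hm : StrictMonoOn (fun x => flowT A Φ (x - y) (u0 x)) (Ici y) := by
    refine strictMonoOn_of_deriv_pos (convex_Ici y)
      (fun x _ => (hd x).continuousAt.continuousWithinAt) fun x hx => ?_
    rw [(hd x).deriv]
    have := F.time_deriv_ge hΦ hu s1 s2 (interior_subset hx : x ∈ Ici y)
    linarith
  have hle : y ≤ y + t / α := by have := div_nonneg ht hα.le; linarith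
  obtain ⟨x, hx, hxt⟩ := intermediate_value_Icc hle
    (f := fun x => flowT A Φ (x - y) (u0 x)) (fun x _ => (hd x).continuousAt.continuousWithinAt)
    (show t ∈ _ from ⟨by simpa [flowT] using ht, by
      have := F.time_ge hΦ (η := y + t / α - y) (by linarith) (u0 (y + t / α))
      have e : α * (y + t / α - y) = t := by field_simp; ring
      rw [e] at this; exact this⟩)
  refine ⟨x, hx.1, hxt, fun x' hx' => ?_⟩
  have hyx' : y ≤ x' := by
    by_contra! h
    have := F.time_neg hΦ (sub_neg.2 h) (u0 x')
    linarith
  exact hm.injOn hyx' hx.1 (hx'.trans hxt.symm)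

/-- The solution `w` in the moving frame: `w t y` is the value carried by the unique characteristic
through `(t, y)`. Near each point with `t ≥ 0` it agrees with a `C¹` function `W` defined on a full
neighbourhood (so one-sided issues at `t = 0` disappear), it solves `A(w) w_t = w_y - G(w)`, and it
satisfies the weighted decay estimates. -/
theorem core (F : Front G A ub p n Θ κ ω K C1 C2 α) (hΦ : IsFlow (fun v => -G v) Φ)
    (hu : Datum G ub u0 κ E) (s1 : K * E * C2 ≤ 1 / 2)
    (s2 : 3 * K * C2 * ((1 + K) * E) ≤ α / 2) :
    ∃ w : ℝ → ℝ → ℝ, (∀ y, w 0 y = u0 y) ∧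
      (∀ t, 0 ≤ t → ∀ y, ∃ x, y ≤ x ∧ w t y = Φ (x - y) (u0 x) ∧
        t = flowT A Φ (x - y) (u0 x)) ∧
      ∀ t, 0 ≤ t → ∀ y, ∃ (W : ℝ → ℝ → ℝ) (wt wy : ℝ),
        ContDiffAt ℝ 1 (uncurry W) (t, y) ∧
        (∀ᶠ q in nhds (t, y), 0 ≤ q.1 → w q.1 q.2 = W q.1 q.2) ∧
        HasDerivAt (fun s => W s y) wt t ∧ HasDerivAt (fun z => W t z) wy y ∧
        A (w t y) * wt = wy - G (w t y) ∧
        |w t y - ub y| * Real.exp (κ * max y 0) ≤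
          2 * (C1 * Real.exp ω) * E * Real.exp (-(ω * t)) ∧
        |wy - G (ub y)| * Real.exp (κ * max y 0) ≤
          (2 * K * (C1 * Real.exp ω) + 6 * K * (1 + K) * (C1 * Real.exp ω) / α) *
            E * Real.exp (-(ω * t)) := by
  have hα := F.α0
  have hK := F.Knn
  have hex := fun (t : ℝ) (y : ℝ) (ht : 0 ≤ t) => F.exists_foot hΦ hu s1 s2 ht y
  choose! X hX1 hX2 hX3 using hex
  refine ⟨fun t y => Φ (X t y - y) (u0 (X t y)), fun y => ?_, fun t ht y =>
    ⟨X t y, hX1 t y ht, rfl, (hX2 t y ht).symm⟩, fun t ht y => ?_⟩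
  · have : y = X 0 y := hX3 0 y le_rfl y (by simp [flowT])
    simp only [← this, sub_self, hΦ.zero]
  set x0 := X t y with hx0
  have hyx := hX1 t y ht
  have hT := hX2 t y ht
  rw [← hx0] at hyx hT
  set D := A (u0 x0) + flowR G A Φ (x0 - y) (u0 x0) * (deriv u0 x0 - G (u0 x0)) with hD
  have hDge : α / 2 ≤ D := F.time_deriv_ge hΦ hu s1 s2 hyx
  have hDpos : 0 < D := by linarith
  set r := deriv u0 x0 - G (u0 x0) with hr
  obtain ⟨φ, hφ1, hφ2, hφ3⟩ := exists_implicit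
    (F := fun z : (ℝ × ℝ) × ℝ => flowT A Φ (z.2 - z.1.2) (u0 z.2) - z.1.1)
    (z0 := (t, y)) (x0 := x0) (D := D)
    (by
      have h1 := F.contDiffT hΦ
      have h2 := hu.smooth
      refine ContDiff.sub (h1.comp (f := fun z : (ℝ × ℝ) × ℝ => (z.2 - z.1.2, u0 z.2)) ?_) ?_
      · exact (contDiff_snd.sub (contDiff_snd.comp contDiff_fst)).prodMk (h2.comp contDiff_snd)
      · exact contDiff_fst.comp contDiff_fst)
    ((F.time_deriv hΦ hu y x0).sub_const t) hDpos.ne'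
  simp only [hT, sub_self, sub_eq_zero] at hφ3
  have hφd : DifferentiableAt ℝ φ (t, y) := hφ1.differentiableAt one_ne_zero
  have hcT : HasDerivAt (fun s : ℝ => (s, y)) (1, 0) t :=
    (hasDerivAt_id t).prodMk (hasDerivAt_const t y)
  have hcY : HasDerivAt (fun z : ℝ => (t, z)) (0, 1) y :=
    (hasDerivAt_const y t).prodMk (hasDerivAt_id y)
  set φt := fderiv ℝ φ (t, y) (1, 0) with hφt
  set φy := fderiv ℝ φ (t, y) (0, 1) with hφy
  have hφt' : HasDerivAt (fun s => φ (s, y)) φt t :=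
    hφd.hasFDerivAt.comp_hasDerivAt t hcT
  have hφy' : HasDerivAt (fun z => φ (t, z)) φy y :=
    hφd.hasFDerivAt.comp_hasDerivAt y hcY
  have hu0 : HasDerivAt u0 (deriv u0 x0) x0 := u0_deriv hu x0
  have hut : HasDerivAt (fun s => u0 (φ (s, y))) (deriv u0 x0 * φt) t :=
    HasDerivAt.comp t (h₂ := u0) (by rw [hφ2]; exact hu0) hφt'
  have huy : HasDerivAt (fun z => u0 (φ (t, z))) (deriv u0 x0 * φy) y :=
    HasDerivAt.comp y (h₂ := u0) (by rw [hφ2]; exact hu0) hφy'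
  have hat : HasDerivAt (fun s => φ (s, y) - y) φt t := hφt'.sub_const y
  have hay : HasDerivAt (fun z => φ (t, z) - z) (φy - 1) y := hφy'.sub (hasDerivAt_id y)
  have hRG := F.R_G hΦ (x0 - y) (u0 x0)
  have hGS := F.G_Φ hΦ (x0 - y) (u0 x0)
  have e1 : D * φt = 1 := by
    have h := hasDerivAt_comp2 (F := flowT A Φ) (a := fun s => φ (s, y) - y)
      (b := fun s => u0 (φ (s, y))) (t := t)
      ((F.contDiffT hΦ).differentiable one_ne_zero _)
      (by simp only [hφ2]; exact F.T_fst hΦ (x0 - y) (u0 x0))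
      (by simp only [hφ2]; exact F.T_snd hΦ (x0 - y) (u0 x0)) hat hut
    have h2 : HasDerivAt (fun s => flowT A Φ (φ (s, y) - y) (u0 (φ (s, y)))) 1 t :=
      (hasDerivAt_id t).congr_of_eventuallyEq
        ((hcT.continuousAt.tendsto).eventually hφ3)
    rw [← h.unique h2, hD]
    linear_combination (-φt) * hRG
  have e2 : D * φy = A (Φ (x0 - y) (u0 x0)) := by
    have h := hasDerivAt_comp2 (F := flowT A Φ) (a := fun z => φ (t, z) - z)
      (b := fun z => u0 (φ (t, z))) (t := y)
      ((F.contDiffT hΦ).differentiable one_ne_zero _)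
      (by simp only [hφ2]; exact F.T_fst hΦ (x0 - y) (u0 x0))
      (by simp only [hφ2]; exact F.T_snd hΦ (x0 - y) (u0 x0)) hay huy
    have h2 : HasDerivAt (fun z => flowT A Φ (φ (t, z) - z) (u0 (φ (t, z)))) 0 y :=
      (hasDerivAt_const y t).congr_of_eventuallyEq
        ((hcY.continuousAt.tendsto).eventually hφ3)
    have := h.unique h2
    rw [hD]
    linear_combination (-φy) * hRG + this
  set S := flowS G Φ (x0 - y) (u0 x0) with hS
  have hSpos : 0 < S := S_pos _ _
  set wv := Φ (x0 - y) (u0 x0) with hwv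
  have hwt : HasDerivAt (fun s => Φ (φ (s, y) - y) (u0 (φ (s, y)))) (φt * (S * r)) t := by
    have h := hasDerivAt_comp2 (F := Φ) (a := fun s => φ (s, y) - y)
      (b := fun s => u0 (φ (s, y))) (t := t)
      ((F.contDiffΦ hΦ).differentiable one_ne_zero _)
      (by simp only [hφ2]; exact hΦ.ode (u0 x0) (x0 - y))
      (by simp only [hφ2]; exact F.Φ_snd hΦ (x0 - y) (u0 x0)) hat hut
    convert! h using 1
    rw [hr, hGS]; ring
  have hwy : HasDerivAt (fun z => Φ (φ (t, z) - z) (u0 (φ (t, z)))) (G wv + φy * (S * r)) y := by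
    have h := hasDerivAt_comp2 (F := Φ) (a := fun z => φ (t, z) - z)
      (b := fun z => u0 (φ (t, z))) (t := y)
      ((F.contDiffΦ hΦ).differentiable one_ne_zero _)
      (by simp only [hφ2]; exact hΦ.ode (u0 x0) (x0 - y))
      (by simp only [hφ2]; exact F.Φ_snd hΦ (x0 - y) (u0 x0)) hay huy
    convert! h using 1
    rw [hr, hGS]; ring
  have hb := F.w_bound hΦ (hu.b0 x0) s1 (sub_nonneg.2 hyx)
  have hSr := F.Sr_bound hΦ (hu.b0 x0) s1 (sub_nonneg.2 hyx) (F.r_bound hu x0)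
  rw [sub_sub_cancel, hT] at hb hSr
  refine ⟨fun s z => Φ (φ (s, z) - z) (u0 (φ (s, z))), φt * (S * r), G wv + φy * (S * r),
    ?_, ?_, hwt, hwy, ?_, hb, ?_⟩
  · have hz : ContDiffAt ℝ 1 (fun q : ℝ × ℝ => (φ q - q.2, u0 (φ q))) (t, y) :=
      (hφ1.sub contDiffAt_snd).prodMk (hu.smooth.contDiffAt.comp _ hφ1)
    exact (F.contDiffΦ hΦ).contDiffAt.comp (t, y) hz
  · filter_upwards [hφ3] with q hq hq0
    rw [hX3 q.1 q.2 hq0 (φ q) hq]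
  · rw [← e2]
    linear_combination (φy * S * r) * e1
  · have hφy0 : φy = A wv / D := by rw [eq_div_iff hDpos.ne', mul_comm]; exact e2
    have hAw0 : 0 ≤ A wv := hα.le.trans (F.Aα _)
    have hφyle : |φy| ≤ 2 * K / α := by
      rw [hφy0, abs_div, abs_of_pos hDpos, abs_of_nonneg hAw0, div_le_div_iff₀ hDpos hα]
      have := mul_le_mul (F.Ab wv) hDge (by linarith) hK
      linarith
    have hL := F.Lip wv (ub y)
    calc |G wv + φy * (S * r) - G (ub y)| * Real.exp (κ * max y 0)
        ≤ (|G wv - G (ub y)| + |φy| * (S * |r|)) * Real.exp (κ * max y 0) := by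
          gcongr
          rw [← abs_of_pos hSpos, ← abs_mul, ← abs_mul, abs_of_pos hSpos]
          refine le_trans (le_of_eq ?_) (abs_add_le _ _)
          ring_nf
      _ ≤ (K * |wv - ub y| + 2 * K / α * (S * |r|)) * Real.exp (κ * max y 0) := by gcongr
      _ = K * (|wv - ub y| * Real.exp (κ * max y 0)) +
          2 * K / α * (S * |r| * Real.exp (κ * max y 0)) := by ring
      _ ≤ K * (2 * (C1 * Real.exp ω) * E * Real.exp (-(ω * t))) +
          2 * K / α * (3 * (C1 * Real.exp ω) * ((1 + K) * E) * Real.exp (-(ω * t))) := by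
          gcongr
      _ = _ := by ring

end Front

/-! ### Weighted estimates for the front profile -/

/-- A continuous function bounded above along `l` is bounded above on any set that every member of
`l` covers up to a compact set. -/
lemma bdd_ratio {h : ℝ → ℝ} (hc : Continuous h) {l : Filter ℝ} {I : Set ℝ}
    (hI : ∀ s ∈ l, ∃ J, IsCompact J ∧ I ⊆ s ∪ J) {C : ℝ} (hl : ∀ᶠ x in l, h x ≤ C) :
    ∃ C', 0 ≤ C' ∧ ∀ x ∈ I, h x ≤ C' := by
  obtain ⟨J, hJ, hIJ⟩ := hI _ hl
  obtain ⟨M, hM⟩ := hJ.exists_bound_of_continuousOn hc.continuousOn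
  refine ⟨max (max C M) 0, le_max_right _ _, fun x hx => ?_⟩
  rcases hIJ hx with h1 | h1
  · exact (show h x ≤ C from h1).trans ((le_max_left _ _).trans (le_max_left _ _))
  · exact ((le_abs_self _).trans (hM x h1)).trans ((le_max_right _ _).trans (le_max_left _ _))

/-- Near a nondegenerate zero `v0` of `G`, the distance to `v0` is comparable to `|G|`. -/
lemma eventually_ratio {G ub : ℝ → ℝ} {l : Filter ℝ} {v0 : ℝ} (hG : DifferentiableAt ℝ G v0)
    (h0 : G v0 = 0) (h1 : deriv G v0 ≠ 0) (hne : ∀ x, G (ub x) ≠ 0) (hl : Tendsto ub l (nhds v0)) :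
    ∀ᶠ x in l, |ub x - v0| / |G (ub x)| ≤ 2 / |deriv G v0| := by
  have hm : 0 < |deriv G v0| := abs_pos.2 h1
  have := (hasDerivAt_iff_isLittleO.1 hG.hasDerivAt).def (half_pos hm)
  filter_upwards [hl.eventually this] with x hx
  have hp := abs_pos.2 (hne x)
  rw [h0, sub_zero, smul_eq_mul, Real.norm_eq_abs, Real.norm_eq_abs] at hx
  rw [div_le_div_iff₀ hp hm]
  have h2 : |(ub x - v0) * deriv G v0| - |G (ub x)| ≤ |G (ub x) - (ub x - v0) * deriv G v0| := by
    rw [abs_sub_comm (G (ub x))]; exact abs_sub_abs_le_abs_sub _ _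
  rw [abs_mul] at h2
  linarith

lemma abs_deriv_sub_le {G : ℝ → ℝ} {K : ℝ} (hG : Differentiable ℝ G)
    (hK : ∀ v, |deriv G v| ≤ K) (v w : ℝ) : |G v - G w| ≤ K * |v - w| :=
  convex_univ.norm_image_sub_le_of_norm_deriv_le (fun x _ => hG x) (fun x _ => hK x)
    (mem_univ w) (mem_univ v)

/-- The profile admits the weighted estimates of `Front`. The logarithmic derivative of the weighted
`p` tends to `G'(u₋) - ω A(u₋) ≥ 0` at `-∞` and to `G'(u₊) + κ - ω A(u₊) ≥ 0` at `+∞`, and its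
distance to these limits is at most `c p`, which the factor `exp (c n)` absorbs as `n` is a bounded
primitive of `p`. No strict inequality is needed, so the critical weight is included. -/
theorem exists_front {G A ub : ℝ → ℝ} {κ ω K α um up s : ℝ}
    (hG : ContDiff ℝ 1 G) (Gb : ∀ v, |G v| ≤ K) (Gb' : ∀ v, |deriv G v| ≤ K)
    (Glip : ∀ v w, |deriv G v - deriv G w| ≤ K * |v - w|)
    (hA : ContDiff ℝ 1 A) (Aα : ∀ v, α ≤ A v) (Ab : ∀ v, A v ≤ K) (Ab' : ∀ v, |deriv A v| ≤ K)
    (α0 : 0 < α) (ub' : ∀ x, HasDerivAt ub (G (ub x)) x) (hs : |s| = 1)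
    (hsp : ∀ x, 0 < s * G (ub x)) (hlm : Tendsto ub atBot (nhds um))
    (hlp : Tendsto ub atTop (nhds up)) (hGm : G um = 0) (hGp : G up = 0)
    (hGm' : 0 < deriv G um) (hGp' : deriv G up < 0) (hω : 0 ≤ ω)
    (hm : ω * A um ≤ deriv G um) (hp : ω * A up ≤ deriv G up + κ) :
    ∃ p n Θ C1 C2, Front G A ub p n Θ κ ω K C1 C2 α := by
  have hK : 0 ≤ K := (abs_nonneg _).trans (Gb 0)
  have hubc : Continuous ub := continuous_iff_continuousAt.2 fun x => (ub' x).continuousAt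
  have hGub : Continuous fun x => G (ub x) := hG.continuous.comp hubc
  have hne : ∀ x, G (ub x) ≠ 0 := fun x h => by have := hsp x; simp [h] at this
  have habs : ∀ x, |G (ub x)| = s * G (ub x) := fun x => by
    rw [← abs_of_pos (hsp x), abs_mul, hs, one_mul]
  have hmono : StrictMono fun x => s * ub x :=
    strictMono_of_hasDerivAt_pos (fun x => (ub' x).const_mul s) hsp
  have hsm : ∀ x, s * um ≤ s * ub x := fun x =>
    hmono.monotone.le_of_tendsto (hlm.const_mul s) x
  have hsp' : ∀ x, s * ub x ≤ s * up := fun x =>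
    hmono.monotone.ge_of_tendsto (hlp.const_mul s) x
  obtain ⟨Cm, hCm0, hCm⟩ := bdd_ratio (h := fun x => |ub x - um| / |G (ub x)|) (I := Iic 0)
    (by have : Continuous fun x => |ub x - um| := by fun_prop
        exact this.div hGub.abs fun x => abs_ne_zero.2 (hne x))
    (fun S hS => by
      obtain ⟨N, hN⟩ := mem_atBot_sets.1 hS
      refine ⟨Icc N 0, isCompact_Icc, fun x hx => ?_⟩
      rcases le_total x N with h | h
      · exact Or.inl (hN x h)
      · exact Or.inr ⟨h, hx⟩)
    (eventually_ratio (hG.differentiable one_ne_zero _) hGm hGm'.ne' hne hlm)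
  obtain ⟨Cp, hCp0, hCp⟩ := bdd_ratio (h := fun x => |ub x - up| / |G (ub x)|) (I := Ici 0)
    (by have : Continuous fun x => |ub x - up| := by fun_prop
        exact this.div hGub.abs fun x => abs_ne_zero.2 (hne x))
    (fun S hS => by
      obtain ⟨N, hN⟩ := mem_atTop_sets.1 hS
      refine ⟨Icc 0 N, isCompact_Icc, fun x hx => ?_⟩
      rcases le_total N x with h | h
      · exact Or.inl (hN x h)
      · exact Or.inr ⟨hx, h⟩)
    (eventually_ratio (hG.differentiable one_ne_zero _) hGp hGp'.ne hne hlp)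
  replace hCm : ∀ x ≤ 0, |ub x - um| ≤ Cm * (s * G (ub x)) := fun x hx => by
    have := hCm x hx
    rwa [habs, div_le_iff₀ (hsp x)] at this
  replace hCp : ∀ x, 0 ≤ x → |ub x - up| ≤ Cp * (s * G (ub x)) := fun x hx => by
    have := hCp x hx
    rwa [habs, div_le_iff₀ (hsp x)] at this
  have LA := abs_deriv_sub_le (hA.differentiable one_ne_zero) Ab'
  set Θ : ℝ → ℝ := fun x => ∫ t in (0:ℝ)..x, A (ub t) with hΘ
  have hΘ' : ∀ x, HasDerivAt Θ (A (ub x)) x := fun x =>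
    hasDerivAt_prim (hA.continuous.comp hubc) x
  have hp' : ∀ x, HasDerivAt (fun x => s * G (ub x)) (deriv G (ub x) * (s * G (ub x))) x :=
    fun x => by
      have := ((hG.differentiable one_ne_zero _).hasDerivAt.comp x (ub' x)).const_mul s
      convert! this using 1; ring
  have hn' : ∀ x, HasDerivAt (fun x => s * (ub x - um)) (s * G (ub x)) x :=
    fun x => ((ub' x).sub_const um).const_mul s
  have hn0 : ∀ x, 0 ≤ s * (ub x - um) := fun x => by have := hsm x; linarith
  set V := s * (up - um) with hV
  have hnV : ∀ x, s * (ub x - um) ≤ V := fun x => by have := hsp' x; linarith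
  have hV0 : 0 ≤ V := (hn0 0).trans (hnV 0)
  set c := (K + ω * K) * (Cm + Cp) with hc
  have hc0 : 0 ≤ c := by positivity
  have hq : ∀ k x : ℝ, HasDerivAt
      (fun x => s * G (ub x) * Real.exp (k * x) * Real.exp (-(ω * Θ x)) *
        Real.exp (c * (s * (ub x - um))))
      (s * G (ub x) * Real.exp (k * x) * Real.exp (-(ω * Θ x)) *
        Real.exp (c * (s * (ub x - um))) *
        (deriv G (ub x) + k - ω * A (ub x) + c * (s * G (ub x)))) x := fun k x => by
    have := (((hp' x).mul ((hasDerivAt_id x).const_mul k).exp).mul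
      ((hΘ' x).const_mul ω).neg.exp).mul ((hn' x).const_mul c).exp
    convert! this using 1
    simp only [Pi.mul_apply, Pi.neg_apply, id]
    ring
  have hqpos : ∀ k x : ℝ, 0 ≤ s * G (ub x) * Real.exp (k * x) * Real.exp (-(ω * Θ x)) *
        Real.exp (c * (s * (ub x - um))) := fun k x => by have := hsp x; positivity
  have est : ∀ x v0 C, |ub x - v0| ≤ C * (s * G (ub x)) → C ≤ Cm + Cp →
      deriv G v0 - ω * A v0 ≤ deriv G (ub x) - ω * A (ub x) + c * (s * G (ub x)) := by
    intro x v0 C h1 h2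
    have e1 := (abs_le.1 (Glip (ub x) v0)).1
    have e2 := mul_le_mul_of_nonneg_left (abs_le.1 (LA (ub x) v0)).2 hω
    have e3 : (K + ω * K) * |ub x - v0| ≤ c * (s * G (ub x)) := by
      rw [hc, mul_assoc]
      refine mul_le_mul_of_nonneg_left (h1.trans ?_) (by positivity)
      exact mul_le_mul_of_nonneg_right h2 (hsp x).le
    linarith
  set q : ℝ → ℝ := fun x => s * G (ub x) * Real.exp (κ * max x 0) * Real.exp (-(ω * Θ x)) *
        Real.exp (c * (s * (ub x - um))) with hqdef
  have hmq : Monotone q := by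
    have m1 : MonotoneOn q (Iic 0) := by
      refine MonotoneOn.congr (f₁ := fun x => s * G (ub x) * Real.exp (0 * x) *
        Real.exp (-(ω * Θ x)) * Real.exp (c * (s * (ub x - um)))) ?_ fun x hx => ?_
      · refine monotoneOn_of_deriv_nonneg (convex_Iic 0)
          (fun x _ => (hq 0 x).continuousAt.continuousWithinAt)
          (fun x _ => (hq 0 x).differentiableAt.differentiableWithinAt) fun x hx => ?_
        rw [(hq 0 x).deriv]
        refine mul_nonneg (hqpos 0 x) ?_
        have := est x um Cm (hCm x (mem_Iic.1 (interior_subset hx))) (by linarith)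
        linarith
      · simp [hqdef, max_eq_right (show x ≤ 0 from hx)]
    have m2 : MonotoneOn q (Ici 0) := by
      refine MonotoneOn.congr (f₁ := fun x => s * G (ub x) * Real.exp (κ * x) *
        Real.exp (-(ω * Θ x)) * Real.exp (c * (s * (ub x - um)))) ?_ fun x hx => ?_
      · refine monotoneOn_of_deriv_nonneg (convex_Ici 0)
          (fun x _ => (hq κ x).continuousAt.continuousWithinAt)
          (fun x _ => (hq κ x).differentiableAt.differentiableWithinAt) fun x hx => ?_
        rw [(hq κ x).deriv]
        refine mul_nonneg (hqpos κ x) ?_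
        have := est x up Cp (hCp x (interior_subset hx)) (by linarith)
        linarith
      · simp [hqdef, max_eq_left (show 0 ≤ x from hx)]
    exact m1.Iic_union_Ici m2
  have F1 : ∀ y x, y ≤ x → s * G (ub y) * Real.exp (κ * max y 0) * Real.exp (-(ω * Θ y)) ≤
      Real.exp (c * V) * (s * G (ub x) * Real.exp (κ * max x 0) * Real.exp (-(ω * Θ x))) := by
    intro y x hyx
    have h1 := hsp y
    have h2 := hsp x
    calc _ ≤ q y := le_mul_of_one_le_right (by positivity)
          (Real.one_le_exp (mul_nonneg hc0 (hn0 y)))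
      _ ≤ q x := hmq hyx
      _ ≤ s * G (ub x) * Real.exp (κ * max x 0) * Real.exp (-(ω * Θ x)) * Real.exp (c * V) := by
          refine mul_le_mul_of_nonneg_left (Real.exp_le_exp.2 ?_) (by positivity)
          exact mul_le_mul_of_nonneg_left (hnV x) hc0
      _ = _ := by ring
  have hp00 := hsp 0
  refine ⟨_, _, Θ, Real.exp (c * V), Cm + V * Real.exp (c * V) / (s * G (ub 0)),
    hG, Gb, Gb', Glip, hA, Aα, Ab, Ab', α0, ub', hp', hsp, hn', hn0, hΘ', (Real.exp_pos _).le,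
    by positivity, hω, F1, fun x => ?_⟩
  have hpx := hsp x
  have hpe : 0 ≤ s * G (ub x) * Real.exp (κ * max x 0) := by positivity
  rw [add_mul]
  rcases le_total x 0 with hx | hx
  · have h1 := hCm x hx
    have h2 : s * (ub x - um) ≤ |ub x - um| := by
      refine (le_abs_self _).trans ?_
      rw [abs_mul, hs, one_mul]
    have h3 : 0 ≤ V * Real.exp (c * V) / (s * G (ub 0)) *
      (s * G (ub x) * Real.exp (κ * max x 0)) := by positivity
    rw [max_eq_right hx] at h3 ⊢
    simp only [mul_zero, Real.exp_zero, mul_one] at h3 ⊢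
    linarith
  · have h1 := F1 0 x hx
    have hΘ0 : Θ 0 = 0 := by simp [hΘ]
    have hΘx : 0 ≤ Θ x := intervalIntegral.integral_nonneg hx fun t _ => α0.le.trans (Aα _)
    simp only [max_self, mul_zero, hΘ0, neg_zero, Real.exp_zero, mul_one] at h1
    have h2 : Real.exp (-(ω * Θ x)) ≤ 1 := Real.exp_le_one_iff.2 (by
      have := mul_nonneg hω hΘx; linarith)
    have h3 : s * G (ub 0) ≤ Real.exp (c * V) * (s * G (ub x) * Real.exp (κ * max x 0)) :=
      h1.trans (mul_le_mul_of_nonneg_left (mul_le_of_le_one_right hpe h2) (Real.exp_pos _).le)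
    have h4 : V ≤ V * Real.exp (c * V) / (s * G (ub 0)) *
        (s * G (ub x) * Real.exp (κ * max x 0)) := by
      rw [div_mul_eq_mul_div, le_div_iff₀ hp00, mul_assoc V]
      exact mul_le_mul_of_nonneg_left h3 hV0
    have := hnV x
    have := mul_nonneg hCm0 hpe
    linarith

/-! ### Cutoff of the nonlinearities and sign of the relative speed -/

lemma bdd_of_compactSupport {h : ℝ → ℝ} (hc : Continuous h) (hs : HasCompactSupport h) :
    ∃ M, ∀ x, |h x| ≤ M := hs.exists_bound_of_continuous hc

/-- Truncation outside an interval on which `a > 0`: with a bump function `χ` equal to one near the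
interval, `A = χ / a + 1 - χ` and `G = -χ g A` agree with `1 / a` and `-g / a` near the interval and
satisfy global bounds. -/
lemma exists_cutoff {a g : ℝ → ℝ} (ha : ContDiff ℝ 2 a) (hg : ContDiff ℝ 2 g) {c r : ℝ}
    (hr : 0 ≤ r) (hpos : ∀ v, |v - c| ≤ r → 0 < a v) :
    ∃ (ε : ℝ) (G A : ℝ → ℝ) (K α : ℝ), 0 < ε ∧
      (∀ v, |v - c| ≤ r + ε → A v * a v = 1 ∧ G v = -(g v * A v)) ∧
      ContDiff ℝ 1 G ∧ (∀ v, |G v| ≤ K) ∧ (∀ v, |deriv G v| ≤ K) ∧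
      (∀ v w, |deriv G v - deriv G w| ≤ K * |v - w|) ∧
      ContDiff ℝ 1 A ∧ (∀ v, α ≤ A v) ∧ (∀ v, A v ≤ K) ∧ (∀ v, |deriv A v| ≤ K) ∧ 0 < α := by
  have hO : IsOpen {v | 0 < a v} := isOpen_lt continuous_const ha.continuous
  obtain ⟨δ, hδ, hsub⟩ := (isCompact_closedBall c r).exists_cthickening_subset_open hO
    (fun v hv => hpos v (by rwa [Metric.mem_closedBall, Real.dist_eq] at hv))
  rw [cthickening_closedBall hδ.le hr] at hsub
  have hpos' : ∀ v, |v - c| ≤ r + δ → 0 < a v := fun v hv =>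
    hsub (by rw [Metric.mem_closedBall, Real.dist_eq]; linarith)
  let χ : ContDiffBump c := ⟨r + δ / 2, r + δ, by linarith, by linarith⟩
  have hχ : ContDiff ℝ 2 χ := χ.contDiff
  have hout : ∀ v, χ v ≠ 0 → 0 < a v := fun v hv => by
    refine hpos' v ?_
    have : v ∈ support χ := hv
    rw [χ.support_eq, Metric.mem_ball, Real.dist_eq] at this
    exact this.le
  set H : ℝ → ℝ := fun v => χ v / a v with hH
  have hHc : ContDiff ℝ 2 H := by
    rw [contDiff_iff_contDiffAt]
    intro v
    by_cases hv : v ∈ tsupport χ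
    · refine hχ.contDiffAt.div ha.contDiffAt (hpos' v ?_).ne'
      rw [χ.tsupport_eq, Metric.mem_closedBall, Real.dist_eq] at hv
      exact hv
    · refine (contDiffAt_const (c := (0:ℝ))).congr_of_eventuallyEq ?_
      filter_upwards [notMem_tsupport_iff_eventuallyEq.1 hv] with x hx
      simp [hH, hx]
  have hχs : HasCompactSupport χ := χ.hasCompactSupport
  have hHs : HasCompactSupport H := hχs.mono (fun v hv h => hv (by simp [hH, h]))
  set B : ℝ → ℝ := fun v => H v - χ v with hB
  have hBc : ContDiff ℝ 2 B := hHc.sub hχ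
  have hBs : HasCompactSupport B := hHs.sub hχs
  set A : ℝ → ℝ := fun v => B v + 1 with hA
  have hAc : ContDiff ℝ 2 A := hBc.add contDiff_const
  have hA0 : ∀ v, 0 < A v := fun v => by
    simp only [hA, hB, hH]
    rcases eq_or_ne (χ v) 0 with h | h
    · simp [h]
    · have h1 : 0 < χ v := lt_of_le_of_ne χ.nonneg h.symm
      have h2 := div_pos h1 (hout v h)
      have h3 : χ v ≤ 1 := χ.le_one
      linarith
  have hA' : deriv A = deriv B := by funext v; simp [hA]
  obtain ⟨x1, hx1, hmin⟩ := (isCompact_closedBall c (r + δ)).exists_isMinOn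
    ⟨c, Metric.mem_closedBall_self (by linarith)⟩ hAc.continuous.continuousOn
  set G : ℝ → ℝ := fun v => χ v * -(g v * A v) with hG
  have hGc : ContDiff ℝ 2 G := hχ.mul (hg.mul hAc).neg
  have hGs : HasCompactSupport G := hχs.mul_right
  have hG' : ContDiff ℝ 1 (deriv G) := hGc.deriv'
  obtain ⟨M1, h1⟩ := bdd_of_compactSupport hGc.continuous hGs
  obtain ⟨M2, h2⟩ := bdd_of_compactSupport hG'.continuous hGs.deriv
  obtain ⟨M3, h3⟩ := bdd_of_compactSupport (hG'.continuous_deriv le_rfl) hGs.deriv.deriv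
  obtain ⟨M4, h4⟩ := bdd_of_compactSupport hBc.continuous hBs
  obtain ⟨M5, h5⟩ := bdd_of_compactSupport (hBc.continuous_deriv (by norm_num)) hBs.deriv
  have n1 := (abs_nonneg _).trans (h1 0)
  have n2 := (abs_nonneg _).trans (h2 0)
  have n3 := (abs_nonneg _).trans (h3 0)
  have n4 := (abs_nonneg _).trans (h4 0)
  have n5 := (abs_nonneg _).trans (h5 0)
  refine ⟨δ / 2, G, A, M1 + M2 + M3 + M4 + M5 + 1, min (A x1) 1, by linarith, fun v hv => ?_,
    hGc.of_le (by norm_num), fun v => (h1 v).trans (by linarith),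
    fun v => (h2 v).trans (by linarith), fun v w => ?_, hAc.of_le (by norm_num), fun v => ?_,
    fun v => ?_, fun v => ?_, lt_min (hA0 _) one_pos⟩
  · have hχ1 : χ v = 1 := χ.one_of_mem_closedBall (by
      rw [Metric.mem_closedBall, Real.dist_eq]; exact hv)
    have := (hpos' v (by linarith)).ne'
    constructor
    · simp only [hA, hB, hH, hχ1]; field_simp; ring
    · simp [hG, hχ1]
  · refine (abs_deriv_sub_le (hG'.differentiable one_ne_zero) h3 v w).trans ?_
    exact mul_le_mul_of_nonneg_right (by linarith) (abs_nonneg _)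
  · by_cases hv : v ∈ Metric.closedBall c (r + δ)
    · exact (min_le_left _ _).trans (hmin hv)
    · have : χ v = 0 := by
        by_contra h
        have h' : v ∈ support χ := h
        rw [χ.support_eq] at h'
        exact hv (Metric.ball_subset_closedBall h')
      refine (min_le_right _ _).trans ?_
      simp [hA, hB, hH, this]
  · have := (le_abs_self _).trans (h4 v)
    simp only [hA]; linarith
  · rw [hA']; exact (h5 v).trans (by linarith)

/-- On the closed interval spanned by the front, `σ - f'` is positive. If instead `f' - σ`
were positive along the front, the profile equation would give `g (ub x)` the sign of `ub'`, whereas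
`g u₊ = 0 < g' u₊` and the monotone approach to `u₊` force the opposite sign near `u₊`. The interval
is given by its centre `c` and radius `r`, and `s = ±1` is the sign of `ub'`. -/
lemma exists_sign {f g ub : ℝ → ℝ} {σ um up : ℝ} (hf : Continuous (deriv f))
    (hub : ContDiff ℝ 1 ub) (hub' : ∀ x, deriv ub x ≠ 0) (hnc : ∀ x, deriv f (ub x) ≠ σ)
    (hprof : ∀ x, (deriv f (ub x) - σ) * deriv ub x = g (ub x))
    (hlm : Tendsto ub atBot (nhds um)) (hlp : Tendsto ub atTop (nhds up))
    (hgup : g up = 0) (hg'up : 0 < deriv g up)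
    (hfum : deriv f um ≠ σ) (hfup : deriv f up ≠ σ) :
    ∃ s : ℝ, |s| = 1 ∧ (∀ x, 0 < s * deriv ub x) ∧
      ∃ c r : ℝ, 0 ≤ r ∧ (∀ x, |ub x - c| ≤ r) ∧ |um - c| ≤ r ∧ |up - c| ≤ r ∧
      ∀ v, |v - c| ≤ r → 0 < σ - deriv f v := by
  have sgn : ∀ h : ℝ → ℝ, Continuous h → (∀ x, h x ≠ 0) → (∀ x, 0 < h x) ∨ ∀ x, h x < 0 := by
    intro h hc hn
    by_contra! hh
    obtain ⟨⟨x, hx⟩, y, hy⟩ := hh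
    obtain ⟨z, hz⟩ := mem_range_of_exists_le_of_exists_ge hc ⟨x, hx⟩ ⟨y, hy⟩
    exact hn z hz
  have hub1 := hub.continuous_deriv le_rfl
  obtain ⟨s, hs, hs2, hsp⟩ : ∃ s : ℝ, |s| = 1 ∧ s * s = 1 ∧ ∀ x, 0 < s * deriv ub x := by
    rcases sgn _ hub1 hub' with h | h
    · exact ⟨1, by simp, by simp, by simpa using h⟩
    · exact ⟨-1, by simp, by simp, by simpa using h⟩
  have hd : ∀ x, HasDerivAt ub (deriv ub x) x := fun x =>
    (hub.differentiable one_ne_zero x).hasDerivAt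
  have hmono : StrictMono fun x => s * ub x :=
    strictMono_of_hasDerivAt_pos (fun x => (hd x).const_mul s) hsp
  have hsm : ∀ x, s * um ≤ s * ub x := fun x =>
    hmono.monotone.le_of_tendsto (hlm.const_mul s) x
  have hsp' : ∀ x, s * ub x ≤ s * up := fun x =>
    hmono.monotone.ge_of_tendsto (hlp.const_mul s) x
  have hsp'' : ∀ x, s * ub x < s * up := fun x => (hmono (lt_add_one x)).trans_le (hsp' _)
  have hneg : ∀ x, 0 < σ - deriv f (ub x) := by
    have hc : Continuous fun x => σ - deriv f (ub x) :=
      continuous_const.sub (hf.comp hub.continuous)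
    rcases sgn _ hc (fun x h => hnc x (by linarith)) with h | h
    · exact h
    exfalso
    have hgd : HasDerivAt g (deriv g up) up :=
      (differentiableAt_of_deriv_ne_zero hg'up.ne').hasDerivAt
    have := (hasDerivAt_iff_isLittleO.1 hgd).def (half_pos hg'up)
    obtain ⟨x, hx⟩ := (hlp.eventually this).exists
    rw [hgup, sub_zero, smul_eq_mul, Real.norm_eq_abs, Real.norm_eq_abs, ← hprof x] at hx
    have h1 := h x
    have h2 := hsp x
    have h3 := hsp'' x
    have e1 : |ub x - up| = s * (up - ub x) := by
      rw [← abs_of_pos (show 0 < s * (up - ub x) by linarith), abs_mul, hs, one_mul, abs_sub_comm]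
    rw [e1] at hx
    have h4 : s * ((deriv f (ub x) - σ) * deriv ub x - (ub x - up) * deriv g up) ≤
        |(deriv f (ub x) - σ) * deriv ub x - (ub x - up) * deriv g up| := by
      refine (le_abs_self _).trans ?_
      rw [abs_mul, hs, one_mul]
    have h5 : 0 < (deriv f (ub x) - σ) * (s * deriv ub x) := mul_pos (by linarith) h2
    have h6 : 0 < s * (up - ub x) * deriv g up := mul_pos (by linarith) hg'up
    linarith
  have hfub : Continuous fun v => σ - deriv f v := continuous_const.sub hf
  have hm0 : 0 < σ - deriv f um := lt_of_le_of_ne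
    (ge_of_tendsto ((hfub.tendsto um).comp hlm) (Eventually.of_forall fun x => (hneg x).le))
    (fun h => hfum (by linarith))
  have hp0 : 0 < σ - deriv f up := lt_of_le_of_ne
    (ge_of_tendsto ((hfub.tendsto up).comp hlp) (Eventually.of_forall fun x => (hneg x).le))
    (fun h => hfup (by linarith))
  have hV : 0 ≤ s * (up - um) := by have := hsm 0; have := hsp' 0; linarith
  have habs : ∀ v, |v - (um + up) / 2| = |s * v - s * ((um + up) / 2)| := fun v => by
    rw [← mul_sub, abs_mul, hs, one_mul]
  have hiff : ∀ v, |v - (um + up) / 2| ≤ s * (up - um) / 2 ↔ s * um ≤ s * v ∧ s * v ≤ s * up := by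
    intro v
    rw [habs, abs_le]
    constructor
    · rintro ⟨h1, h2⟩; constructor <;> linarith
    · rintro ⟨h1, h2⟩; constructor <;> linarith
  have hinj : ∀ v w, s * v = s * w → v = w := fun v w h => by
    have : s * (s * v) = s * (s * w) := by rw [h]
    rwa [← mul_assoc, ← mul_assoc, hs2, one_mul, one_mul] at this
  refine ⟨s, hs, hsp, (um + up) / 2, s * (up - um) / 2, by linarith,
    fun x => (hiff _).2 ⟨hsm x, hsp' x⟩, (hiff _).2 ⟨le_rfl, by linarith⟩,
    (hiff _).2 ⟨by linarith, le_rfl⟩, fun v hv => ?_⟩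
  obtain ⟨h1, h2⟩ := (hiff v).1 hv
  rcases h1.eq_or_lt with h1 | h1
  · rw [← hinj _ _ h1]; exact hm0
  rcases h2.eq_or_lt with h2 | h2
  · rw [hinj _ _ h2]; exact hp0
  obtain ⟨x, hx⟩ := mem_range_of_exists_le_of_exists_ge
    (show Continuous fun x => s * ub x from hub.continuous.const_mul s)
    (((hlm.const_mul s).eventually_le_const h1).exists)
    (((hlp.const_mul s).eventually_const_le h2).exists)
  rw [← hinj _ _ hx]; exact hneg x

/-! ### Uniqueness along characteristics -/

/-- Any classical solution `u` carries the values of `Z` along the curve `(τ, ξ)` with the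
speed and source prescribed by `Z`. The difference `u (τ, ξ) - Z` solves a linear homogeneous
equation with locally bounded coefficient, so it vanishes by Grönwall; since `u` is differentiable
up to `t = 0` only from the right, derivatives are taken within the closed half-plane. -/
lemma IsClassicalSol.along {f g u0 : ℝ → ℝ} {u : ℝ → ℝ → ℝ} (hu : IsClassicalSol f g u0 u)
    (hf : ContDiff ℝ 1 (deriv f)) (hg : ContDiff ℝ 1 g) {Z τ ξ c : ℝ → ℝ} (hc : Continuous c)
    (hZ : ∀ η, 0 ≤ η → HasDerivAt Z (c η * g (Z η)) η)
    (hτ : ∀ η, 0 ≤ η → HasDerivAt τ (c η) η)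
    (hξ : ∀ η, 0 ≤ η → HasDerivAt ξ (c η * deriv f (Z η)) η)
    (hτ0 : ∀ η, 0 ≤ η → 0 ≤ τ η) (h0 : u (τ 0) (ξ 0) = Z 0) {L : ℝ} (hL : 0 ≤ L) :
    u (τ L) (ξ L) = Z L := by
  obtain ⟨hC, -, hpde⟩ := hu
  set D : Set (ℝ × ℝ) := Ici (0:ℝ) ×ˢ univ with hD
  have hUD : UniqueDiffOn ℝ D := (uniqueDiffOn_Ici 0).prod uniqueDiffOn_univ
  set P := fderivWithin ℝ (uncurry u) D with hP
  have hPc : ContinuousOn P D := hC.continuousOn_fderivWithin hUD le_rfl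
  have hPd : ∀ q ∈ D, HasFDerivWithinAt (uncurry u) (P q) D q := fun q hq =>
    (hC.differentiableOn one_ne_zero q hq).hasFDerivWithinAt
  have ht : ∀ t x, 0 ≤ t → derivWithin (fun s => u s x) (Ici (0:ℝ)) t = P (t, x) (1, 0) := by
    intro t x h
    have := (hPd (t, x) ⟨h, trivial⟩).comp_hasDerivWithinAt (f := fun s => (s, x)) t
      (s := Ici 0) ((hasDerivWithinAt_id t _).prodMk (hasDerivWithinAt_const t _ x))
      (fun s hs => ⟨hs, trivial⟩)
    exact this.derivWithin (uniqueDiffOn_Ici 0 t h)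
  have hx : ∀ t x, 0 ≤ t → deriv (u t) x = P (t, x) (0, 1) := by
    intro t x h
    have := (hPd (t, x) ⟨h, trivial⟩).comp_hasDerivWithinAt (f := fun z => (t, z)) x
      (s := univ) ((hasDerivWithinAt_const x _ t).prodMk (hasDerivWithinAt_id x _))
      (fun s hs => ⟨h, trivial⟩)
    exact (hasDerivWithinAt_univ.1 this).deriv
  set γ : ℝ → ℝ × ℝ := fun η => (τ η, ξ η) with hγ
  have hγD : MapsTo γ (Ici 0) D := fun η hη => ⟨hτ0 η hη, trivial⟩
  have hγc : ContinuousOn γ (Ici 0) := fun η hη =>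
    ((hτ η hη).continuousAt.prodMk (hξ η hη).continuousAt).continuousWithinAt
  have hUc : ContinuousOn (fun η => u (τ η) (ξ η)) (Ici 0) := hC.continuousOn.comp hγc hγD
  have hZc : ContinuousOn Z (Ici 0) := fun η hη => (hZ η hη).continuousAt.continuousWithinAt
  set k : ℝ → ℝ := fun η => c η * (avg g (u (τ η) (ξ η)) (Z η) -
    P (γ η) (0, 1) * avg (deriv f) (u (τ η) (ξ η)) (Z η)) with hk
  have hkc : ContinuousOn k (Ici 0) := by
    refine hc.continuousOn.mul (ContinuousOn.sub ?_ (ContinuousOn.mul ?_ ?_))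
    · exact (continuous_avg hg).comp_continuousOn (hUc.prodMk hZc)
    · exact (hPc.comp hγc hγD).clm_apply continuousOn_const
    · exact (continuous_avg hf).comp_continuousOn (hUc.prodMk hZc)
  obtain ⟨M, hM⟩ := isCompact_Icc.exists_bound_of_continuousOn
    (hkc.mono (fun x hx => hx.1 : Icc 0 L ⊆ Ici 0))
  have he : ∀ η, 0 ≤ η → HasDerivWithinAt (fun η => u (τ η) (ξ η) - Z η)
      (k η * (u (τ η) (ξ η) - Z η)) (Ici 0) η := by
    intro η hη
    have h1 := (hPd (γ η) (hγD hη)).comp_hasDerivWithinAt η (s := Ici 0)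
      ((hτ η hη).prodMk (hξ η hη)).hasDerivWithinAt hγD
    have h2 := h1.sub (hZ η hη).hasDerivWithinAt
    convert! h2 using 1
    have e3 : ((c η, c η * deriv f (Z η)) : ℝ × ℝ) =
        c η • ((1, 0) : ℝ × ℝ) + (c η * deriv f (Z η)) • ((0, 1) : ℝ × ℝ) := by simp
    have h3 := hpde (τ η) (hτ0 η hη) (ξ η)
    rw [ht _ _ (hτ0 η hη), hx _ _ (hτ0 η hη)] at h3
    rw [e3, map_add, map_smul, map_smul, smul_eq_mul, smul_eq_mul]
    have h4 := avg_mul hg (u (τ η) (ξ η)) (Z η)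
    have h5 := avg_mul hf (u (τ η) (ξ η)) (Z η)
    simp only [hk, hγ]
    linear_combination c η * h4 - c η * P (τ η, ξ η) (0, 1) * h5 - c η * h3
  have := eq_zero_of_abs_deriv_le_mul_abs_self_of_eq_zero_right
    (f := fun η => u (τ η) (ξ η) - Z η) (K := M) (a := 0) (b := L)
    ((hUc.sub hZc).mono (fun x hx => hx.1))
    (fun η hη => (he η hη.1).mono (Ici_subset_Ici.2 hη.1)) (by simp [h0])
    (fun η hη => by
      rw [norm_mul]
      exact mul_le_mul_of_nonneg_right (hM η ⟨hη.1, hη.2.le⟩) (norm_nonneg _))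
    L ⟨hL, le_rfl⟩
  exact sub_eq_zero.1 this

/-! ### The weighted norm and the stability theorem -/

lemma wNorm_le {κ : ℝ} {v v' : ℝ → ℝ} {B : ℝ} (hv : ∀ x, HasDerivAt v (v' x) x)
    (h0 : ∀ x, |v x| * Real.exp (κ * max x 0) ≤ B)
    (h1 : ∀ x, |v' x| * Real.exp (κ * max x 0) ≤ B) : wNorm κ v ≤ B := by
  refine ciSup_le fun x => ?_
  rw [Real.exp_neg, div_inv_eq_mul, (hv x).deriv, max_mul_of_nonneg _ _ (Real.exp_pos _).le]
  exact max_le (h0 x) (h1 x)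

lemma le_wNorm {κ : ℝ} {v : ℝ → ℝ} (h0 : IsBUC fun x => v x / Real.exp (-(κ * max x 0)))
    (h1 : IsBUC fun x => deriv v x / Real.exp (-(κ * max x 0))) (x : ℝ) :
    |v x| * Real.exp (κ * max x 0) ≤ wNorm κ v ∧
      |deriv v x| * Real.exp (κ * max x 0) ≤ wNorm κ v := by
  obtain ⟨⟨M0, hM0⟩, -⟩ := h0
  obtain ⟨⟨M1, hM1⟩, -⟩ := h1
  have e : ∀ z y : ℝ, |z| / Real.exp (-(κ * max y 0)) = |z| * Real.exp (κ * max y 0) :=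
    fun z y => by rw [Real.exp_neg, div_inv_eq_mul]
  have hb : BddAbove (range fun x => max |v x| |deriv v x| / Real.exp (-(κ * max x 0))) := by
    refine ⟨max M0 M1, ?_⟩
    rintro _ ⟨y, rfl⟩
    have a0 := hM0 y
    have a1 := hM1 y
    simp only [abs_div, Real.abs_exp] at a0 a1
    simp only [← max_div_div_right (Real.exp_pos _).le]
    exact max_le_max a0 a1
  have h := le_ciSup hb x
  constructor
  · rw [← e]
    exact le_trans (div_le_div_of_nonneg_right (le_max_left _ _) (Real.exp_pos _).le) h
  · rw [← e]
    exact le_trans (div_le_div_of_nonneg_right (le_max_right _ _) (Real.exp_pos _).le) h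

/-- **Exponential convective stability of smooth non-characteristic monostable fronts**
(Theorem "fronts-exp"): for `κ ≥ κ⁺`, perturbations measured in the exponentially
weighted `W^{1,∞}_{κ,+}` norm decay at rate `exp(−t ω_κ)`. -/
theorem stmt_1
    (f g : ℝ → ℝ) (hf : ContDiff ℝ (⊤ : ℕ∞) f) (hg : ContDiff ℝ (⊤ : ℕ∞) g)
    (σ : ℝ) (ub : ℝ → ℝ) (hub : ContDiff ℝ (⊤ : ℕ∞) ub)
    (hubbd : ∃ M, ∀ x, |ub x| ≤ M)
    (hub' : ∀ x, deriv ub x ≠ 0)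
    (hnc : ∀ x, deriv f (ub x) ≠ σ)
    (hprof : ∀ x, (deriv f (ub x) - σ) * deriv ub x = g (ub x))
    (um up : ℝ)
    (hlm : Tendsto ub atBot (nhds um)) (hlp : Tendsto ub atTop (nhds up))
    (hgum : g um = 0) (hgup : g up = 0)
    (hg'um : deriv g um < 0) (hg'up : 0 < deriv g up)
    (hfum : deriv f um ≠ σ) (hfup : deriv f up ≠ σ)
    (κp κ ωκ : ℝ)
    (hκp : κp = deriv g up / |deriv f up - σ|)
    (hκ : κp ≤ κ)
    (hωκ : ωκ = min |deriv g um| ((κ - κp) * |deriv f up - σ|)) :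
    ∃ C > (0:ℝ), ∃ δ0 > (0:ℝ), ∀ u0 : ℝ → ℝ, ContDiff ℝ 1 u0 →
      IsBUC (fun x => (u0 x - ub x) / Real.exp (-(κ * max x 0))) →
      IsBUC (fun x => deriv (fun y => u0 y - ub y) x / Real.exp (-(κ * max x 0))) →
      wNorm κ (fun x => u0 x - ub x) ≤ δ0 →
      ∃ u : ℝ → ℝ → ℝ, IsClassicalSol f g u0 u ∧
        (∀ u' : ℝ → ℝ → ℝ, IsClassicalSol f g u0 u' →
          ∀ t, 0 ≤ t → ∀ x, u' t x = u t x) ∧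
        ∀ t, 0 ≤ t →
          wNorm κ (fun x => u t (x + σ * t) - ub x)
            ≤ C * wNorm κ (fun x => u0 x - ub x) * Real.exp (-(t * ωκ)) := by
  have hf1 : ContDiff ℝ 2 (deriv f) := by
    have := hf.of_le (show ((3 : ℕ∞) : WithTop ℕ∞) ≤ ((⊤ : ℕ∞) : WithTop ℕ∞) from
      WithTop.coe_le_coe.2 le_top)
    exact ContDiff.deriv' (n := 2) this
  have hg2 : ContDiff ℝ 2 g := hg.of_le (show ((2 : ℕ∞) : WithTop ℕ∞) ≤ _ from
      WithTop.coe_le_coe.2 le_top)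
  have hub1 : ContDiff ℝ 1 ub := hub.of_le (show ((1 : ℕ∞) : WithTop ℕ∞) ≤ _ from
      WithTop.coe_le_coe.2 le_top)
  obtain ⟨s, hs, hsp, c, r, hr, hubr, humr, hupr, hapos⟩ := exists_sign hf1.continuous hub1 hub' hnc
    hprof hlm hlp hgup hg'up hfum hfup
  obtain ⟨ε, G, A, K, α, hε, hAG, hG, Gb, Gb', Glip, hA, Aα, Ab, Ab', α0⟩ :=
    exists_cutoff (a := fun v => σ - deriv f v) (contDiff_const.sub hf1) hg2 hr hapos
  have hAG0 : ∀ v, |v - c| ≤ r → A v * (σ - deriv f v) = 1 ∧ G v = -(g v * A v) :=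
    fun v hv => hAG v (by linarith)
  have hubG : ∀ x, HasDerivAt ub (G (ub x)) x := fun x => by
    have h := (hub1.differentiable one_ne_zero x).hasDerivAt
    obtain ⟨h1, h2⟩ := hAG0 _ (hubr x)
    convert! h using 1
    rw [h2, ← hprof x]
    linear_combination deriv ub x * h1
  -- near the interval `G = -g A`, so at the zeros of `g` its derivative is `-g' A`
  have hderiv : ∀ v, |v - c| ≤ r → g v = 0 → deriv G v = -(deriv g v * A v) := by
    intro v hv h0
    have hd : HasDerivAt (fun v => -(g v * A v)) (-(deriv g v * A v + g v * deriv A v)) v :=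
      (((hg2.differentiable two_ne_zero v).hasDerivAt).mul
        ((hA.differentiable one_ne_zero v).hasDerivAt)).neg
    have hev : G =ᶠ[nhds v] fun v => -(g v * A v) := by
      filter_upwards [Metric.ball_mem_nhds v hε] with z hz
      rw [Metric.mem_ball, Real.dist_eq] at hz
      refine (hAG z ?_).2
      have := abs_sub_le z v c
      linarith
    rw [(hd.congr_of_eventuallyEq hev).deriv, h0]; ring
  have hAm := (hAG0 um humr).1
  have hAp := (hAG0 up hupr).1
  have ham := hapos um humr
  have hap := hapos up hupr
  have hAm0 : 0 < A um := α0.trans_le (Aα _)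
  have hAp0 : 0 < A up := α0.trans_le (Aα _)
  have hdm := hderiv um humr hgum
  have hdp := hderiv up hupr hgup
  have habs : |deriv f up - σ| = σ - deriv f up := by rw [abs_sub_comm, abs_of_pos hap]
  have hκp' : κp = deriv g up * A up := by
    rw [hκp, habs, div_eq_iff hap.ne', mul_assoc, hAp, mul_one]
  have hω0 : 0 ≤ ωκ := by
    rw [hωκ]
    exact le_min (abs_nonneg _) (mul_nonneg (by linarith) (abs_nonneg _))
  obtain ⟨p, n, Θ, C1, C2, F⟩ := exists_front (κ := κ) (ω := ωκ) (s := s) hG Gb Gb' Glip hA Aα Ab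
    Ab' α0 hubG hs (fun x => by rw [← (hubG x).deriv]; exact hsp x) hlm hlp
    (by rw [(hAG0 um humr).2, hgum]; ring) (by rw [(hAG0 up hupr).2, hgup]; ring)
    (by rw [hdm]; have := mul_neg_of_neg_of_pos hg'um hAm0; linarith)
    (by rw [hdp]; have := mul_pos hg'up hAp0; linarith) hω0
    (by
      have h1 : ωκ ≤ -deriv g um := by
        rw [hωκ, abs_of_neg hg'um]; exact min_le_left _ _
      rw [hdm]
      have := mul_le_mul_of_nonneg_right h1 hAm0.le
      linarith)
    (by
      have h1 : ωκ ≤ (κ - κp) * (σ - deriv f up) := by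
        rw [hωκ, habs]; exact min_le_right _ _
      have := mul_le_mul_of_nonneg_right h1 hAp0.le
      rw [hdp, ← hκp']
      linear_combination this + (κ - κp) * hAp)
  obtain ⟨Φ, hΦ⟩ := exists_flow (K := K) hG.neg (by simpa using Gb) (by simpa [Front.dneg] using Gb')
  have hK := F.Knn
  have hC1 := F.C1nn
  have hC2 := F.C2nn
  -- `D` and `B` are the constants of the decay estimates for `w` and `w_y`; `M` and `m` collect
  -- the three smallness conditions: two for `core`, one keeping values where the cutoff is inactive
  set D := C1 * Real.exp ωκ with hD
  have hD0 : 0 ≤ D := mul_nonneg hC1 (Real.exp_pos _).le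
  set B := 2 * K * D + 6 * K * (1 + K) * D / α with hB
  have hB0 : 0 ≤ B := by positivity
  set M := K * C2 + 3 * K * C2 * (1 + K) + 2 * D + 1 with hM
  have hM0 : 0 < M := by positivity
  set m := min (1 / 2) (min (α / 2) ε) with hm
  have hm0 : 0 < m := lt_min (by norm_num) (lt_min (by linarith) hε)
  refine ⟨2 * D + B + 1, by positivity, m / M, div_pos hm0 hM0, ?_⟩
  intro u0 hu0 hb0 hb1 hsmall
  set E := wNorm κ (fun x => u0 x - ub x) with hE
  have hpt := le_wNorm hb0 hb1
  rw [← hE] at hpt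
  have hE0 : 0 ≤ E := le_trans (by positivity) (hpt 0).1
  have hME : M * E ≤ m := by
    rw [le_div_iff₀ hM0] at hsmall; linarith
  have q1 : 0 ≤ K * C2 * E := by positivity
  have q2 : 0 ≤ 3 * K * C2 * (1 + K) * E := by positivity
  have q3 : 0 ≤ 2 * D * E := by positivity
  have hME' : K * C2 * E + 3 * K * C2 * (1 + K) * E + 2 * D * E + E ≤ m := by
    rw [hM] at hME; linarith
  have m1 : m ≤ 1 / 2 := min_le_left _ _
  have m2 : m ≤ α / 2 := (min_le_right _ _).trans (min_le_left _ _)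
  have m3 : m ≤ ε := (min_le_right _ _).trans (min_le_right _ _)
  have s1 : K * E * C2 ≤ 1 / 2 := by linarith
  have s2 : 3 * K * C2 * ((1 + K) * E) ≤ α / 2 := by linarith
  have s3 : 2 * D * E ≤ ε := by linarith
  have hu : Datum G ub u0 κ E := by
    refine ⟨hu0, fun x => (hpt x).1, fun x => ?_⟩
    have h := (hpt x).2
    have hd : HasDerivAt (fun x => u0 x - ub x) (deriv u0 x - G (ub x)) x :=
      (hu0.differentiable one_ne_zero x).hasDerivAt.sub (hubG x)
    rwa [hd.deriv] at h
  -- a state this close to the front lies where the cutoff is inactive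
  have hloc : ∀ v y t, 0 ≤ t → |v - ub y| * Real.exp (κ * max y 0) ≤
      2 * D * E * Real.exp (-(ωκ * t)) → A v * (σ - deriv f v) = 1 ∧ G v = -(g v * A v) := by
    intro v y t ht h
    refine hAG v ?_
    have hκ0 : 0 ≤ κ := by
      have := mul_pos hg'up hAp0
      linarith
    have h1 : |v - ub y| ≤ |v - ub y| * Real.exp (κ * max y 0) :=
      le_mul_of_one_le_right (abs_nonneg _)
        (Real.one_le_exp (mul_nonneg hκ0 (le_max_right _ _)))
    have h2 : 2 * D * E * Real.exp (-(ωκ * t)) ≤ 2 * D * E :=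
      mul_le_of_le_one_right q3 (Real.exp_le_one_iff.2 (by have := mul_nonneg hω0 ht; linarith))
    have h3 := abs_sub_le v (ub y) c
    have := hubr y
    linarith
  obtain ⟨w, hw0, hfoot, hw⟩ := F.core hΦ hu s1 s2
  -- back to the laboratory frame, `u (t, x) = w (t, x - σ t)`
  have hcl : IsClassicalSol f g u0 (fun t x => w t (x - σ * t)) := by
    refine ⟨?_, fun x => by simp [hw0], ?_⟩
    · rintro ⟨t, x⟩ ⟨ht, -⟩
      obtain ⟨W, wt, wy, hWc, hWe, -⟩ := hw t ht (x - σ * t)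
      have hsh : ContDiff ℝ 1 fun q : ℝ × ℝ => (q.1, q.2 - σ * q.1) := by fun_prop
      have hev := (hsh.continuous.tendsto (t, x)).eventually hWe
      have h1 : ContDiffAt ℝ 1 (fun q : ℝ × ℝ => W q.1 (q.2 - σ * q.1)) (t, x) :=
        ContDiffAt.comp (g := uncurry W) (t, x) hWc hsh.contDiffAt
      refine h1.contDiffWithinAt.congr_of_eventuallyEq ?_ ?_
      · filter_upwards [self_mem_nhdsWithin, hev.filter_mono nhdsWithin_le_nhds] with q hq1 hq2
        exact hq2 hq1.1
      · exact hev.self_of_nhds ht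
    · intro t ht x
      obtain ⟨W, wt, wy, hWc, hWe, hWt, hWy, hode, hb, -⟩ := hw t ht (x - σ * t)
      obtain ⟨hAa, hGg⟩ := hloc _ _ t ht hb
      have hA0 : 0 < A (w t (x - σ * t)) := α0.trans_le (Aα _)
      have hsh : HasDerivAt (fun s => x - σ * s) (-σ) t := by
        simpa using ((hasDerivAt_id t).const_mul σ).const_sub x
      have dt : HasDerivAt (fun s => W s (x - σ * s)) (wt * 1 + wy * -σ) t :=
        hasDerivAt_comp2 (a := fun s => s) (hWc.differentiableAt one_ne_zero) hWt hWy
          (hasDerivAt_id t) hsh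
      have hct : Continuous fun s : ℝ => (s, x - σ * s) := by fun_prop
      have evt := (hct.tendsto t).eventually hWe
      have dt' : HasDerivWithinAt (fun s => w s (x - σ * s)) (wt * 1 + wy * -σ) (Ici 0) t := by
        refine dt.hasDerivWithinAt.congr_of_eventuallyEq ?_ (evt.self_of_nhds ht)
        filter_upwards [self_mem_nhdsWithin, evt.filter_mono nhdsWithin_le_nhds] with q hq1 hq2
        exact hq2 hq1
      have hcx : Continuous fun z : ℝ => (t, z - σ * t) := by fun_prop
      have evx := (hcx.tendsto x).eventually hWe
      have dx : HasDerivAt (fun z => w t (z - σ * t)) wy x := by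
        have h1 : HasDerivAt (fun z => W t (z - σ * t)) wy x := by
          have := HasDerivAt.comp x hWy ((hasDerivAt_id x).sub_const (σ * t))
          rw [mul_one] at this
          exact this
        refine h1.congr_of_eventuallyEq ?_
        filter_upwards [evx] with z hz using hz ht
      rw [dt'.derivWithin (uniqueDiffOn_Ici 0 t ht), dx.deriv]
      refine mul_left_cancel₀ hA0.ne' ?_
      rw [hGg] at hode
      linear_combination hode - wy * hAa
  refine ⟨_, hcl, fun u' hu' t ht x => ?_, fun t ht => ?_⟩
  -- the characteristic through a given point is also a characteristic of any other solution
  · obtain ⟨x0, hyx, hwx, htx⟩ := hfoot t ht (x - σ * t)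
    have hη : ∀ η, 0 ≤ η → A (Φ η (u0 x0)) * (σ - deriv f (Φ η (u0 x0))) = 1 ∧
        G (Φ η (u0 x0)) = -(g (Φ η (u0 x0)) * A (Φ η (u0 x0))) := fun η hη =>
      hloc _ (x0 - η) (flowT A Φ η (u0 x0))
        ((mul_nonneg α0.le hη).trans (F.time_ge hΦ hη (u0 x0)))
        (F.w_bound hΦ (hu.b0 x0) s1 hη)
    have := hu'.along (hf1.of_le one_le_two) (hg2.of_le one_le_two)
      (Z := fun η => Φ η (u0 x0)) (τ := fun η => flowT A Φ η (u0 x0))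
      (ξ := fun η => x0 - η + σ * flowT A Φ η (u0 x0)) (c := fun η => A (Φ η (u0 x0)))
      (hA.continuous.comp (hΦ.cont _))
      (fun η h => by
        have h1 := hΦ.ode (u0 x0) η
        convert! h1 using 1
        rw [(hη η h).2]; ring)
      (fun η _ => F.T_fst hΦ η (u0 x0))
      (fun η h => by
        have h1 := ((hasDerivAt_id η).const_sub x0).add ((F.T_fst hΦ η (u0 x0)).const_mul σ)
        convert! h1 using 1
        linear_combination -(hη η h).1)
      (fun η h => (mul_nonneg α0.le h).trans (F.time_ge hΦ h (u0 x0)))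
      (by simp [flowT, hΦ.zero, hu'.2.1]) (sub_nonneg.2 hyx)
    simp only [← htx, ← hwx] at this
    rw [← this]
    congr 1; ring
  · have hexp : Real.exp (-(t * ωκ)) = Real.exp (-(ωκ * t)) := by rw [mul_comm]
    choose W wt wy hWc hWe hWt hWy hode hb hb' using hw t ht
    have hX0 : 0 ≤ E * Real.exp (-(ωκ * t)) := by positivity
    refine wNorm_le (v' := fun x => wy x - G (ub x)) (fun x => ?_) (fun x => ?_) fun x => ?_
    · simp only [add_sub_cancel_right]
      have hcx : Continuous fun z : ℝ => (t, z) := by fun_prop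
      have evx := (hcx.tendsto x).eventually (hWe x)
      have h1 : HasDerivAt (fun z => w t z) (wy x) x := by
        refine (hWy x).congr_of_eventuallyEq ?_
        filter_upwards [evx] with z hz using hz ht
      exact h1.sub (hubG x)
    · simp only [add_sub_cancel_right]
      rw [hexp]
      refine (hb x).trans ?_
      have := mul_nonneg hB0 hX0
      linarith
    · rw [hexp]
      refine (hb' x).trans ?_
      have := mul_nonneg hD0 hX0
      rw [← hB]
      linarith
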